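/- Let ρ be a density operator on H = H_1 ⊗ … ⊗ H_n and N = {N_j} a neighborhood structure. If both (i) span(ρ) = ∩_j [F_{ρ_{N_j}}(Σ_{N_j}(ρ)) ⊗ B(H_{N̄_j})] and (ii) supp(ρ) = ∩_j supp(ρ_{N_j} ⊗ I_{N̄_j}), then ρ is FFQLS relative to N. -/

import Mathlib

namespace QDS

open Matrix
open scoped ComplexOrder

/-! ### Basic single-system notions -/

section Single

variable {ι : Type*} [Fintype ι] [DecidableEq ι]

open Classical in
/-- The (unique) positive-semidefinite square root of a positive-semidefinite matrix
(junk value `0` if no positive-semidefinite square root exists). -/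
noncomputable def msqrt (A : Matrix ι ι ℂ) : Matrix ι ι ℂ :=
  if h : ∃ B : Matrix ι ι ℂ, B.PosSemidef ∧ B * B = A then h.choose else 0

open Classical in
/-- The Moore–Penrose pseudoinverse of a matrix, defined via its characterizing
properties (it always exists and is unique for complex matrices). -/
noncomputable def mpinv (A : Matrix ι ι ℂ) : Matrix ι ι ℂ :=
  if h : ∃ B : Matrix ι ι ℂ,
      A * B * A = A ∧ B * A * B = B ∧ (A * B)ᴴ = A * B ∧ (B * A)ᴴ = B * A
  then h.choose else 0

/-- A density operator: positive semidefinite with unit trace. -/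
def IsDensity (ρ : Matrix ι ι ℂ) : Prop := ρ.PosSemidef ∧ ρ.trace = 1

/-- A CPTP map in Kraus (operator-sum) form. -/
def IsCPTP (T : Matrix ι ι ℂ →ₗ[ℂ] Matrix ι ι ℂ) : Prop :=
  ∃ (m : ℕ) (M : Fin m → Matrix ι ι ℂ),
    (∀ X, T X = ∑ k, M k * X * (M k)ᴴ) ∧ (∑ k, (M k)ᴴ * M k) = 1

/-- The Lindblad (QDS) generator with Hamiltonian `Hm` and noise operators `Lk`:
`L(X) = -i[Hm, X] + Σₖ (Lₖ X Lₖ† - ½{Lₖ†Lₖ, X})`. -/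
noncomputable def lindbladMap (Hm : Matrix ι ι ℂ) {m : ℕ} (Lk : Fin m → Matrix ι ι ℂ) :
    Matrix ι ι ℂ →ₗ[ℂ] Matrix ι ι ℂ :=
  (-Complex.I) • (LinearMap.mulLeft ℂ Hm - LinearMap.mulRight ℂ Hm) +
    ∑ k, ((LinearMap.mulRight ℂ (Lk k)ᴴ).comp (LinearMap.mulLeft ℂ (Lk k)) -
      ((1 : ℂ)/2) • (LinearMap.mulLeft ℂ ((Lk k)ᴴ * Lk k) +
        LinearMap.mulRight ℂ ((Lk k)ᴴ * Lk k)))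

/-- `L` is a QDS (Lindblad) generator. -/
def IsLindblad (L : Matrix ι ι ℂ →ₗ[ℂ] Matrix ι ι ℂ) : Prop :=
  ∃ Hm : Matrix ι ι ℂ, Hm.IsHermitian ∧
    ∃ (m : ℕ) (Lk : Fin m → Matrix ι ι ℂ), L = lindbladMap Hm Lk

/-- `Ld` is the Hilbert–Schmidt adjoint of `L` (w.r.t. `⟨X,Y⟩ = Tr(X†Y)`). -/
def IsHSAdjoint (L Ld : Matrix ι ι ℂ →ₗ[ℂ] Matrix ι ι ℂ) : Prop :=
  ∀ X Y : Matrix ι ι ℂ, ((Ld X)ᴴ * Y).trace = (Xᴴ * L Y).trace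

/-- The fixed-point set of a (super)operator. -/
def fixSet (T : Matrix ι ι ℂ →ₗ[ℂ] Matrix ι ι ℂ) : Set (Matrix ι ι ℂ) := {X | T X = X}

/-- The support of an operator: the orthogonal complement of its kernel,
equivalently the range of its adjoint. -/
noncomputable def msupp (A : Matrix ι ι ℂ) : Submodule ℂ (ι → ℂ) := LinearMap.range (Aᴴ).mulVecLin

/-- The support of a set of operators: the span of the union of their supports. -/
noncomputable def suppSet (W : Set (Matrix ι ι ℂ)) : Submodule ℂ (ι → ℂ) := ⨆ O ∈ W, msupp O

/-- The minimal modular-invariant distorted algebra generated by `W` relative to `ρ`: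
the smallest subspace containing `W` that is closed under the adjoint, under the
`ρ`-modified product `(X,Y) ↦ X ρ⁻ Y`, and under the modular map `X ↦ ρ^{1/2} X ρ⁻^{1/2}`. -/
noncomputable def Fdist (ρ : Matrix ι ι ℂ) (W : Set (Matrix ι ι ℂ)) :
    Submodule ℂ (Matrix ι ι ℂ) :=
  sInf {S : Submodule ℂ (Matrix ι ι ℂ) | W ⊆ S ∧ (∀ X ∈ S, Xᴴ ∈ S) ∧
    (∀ X ∈ S, ∀ Y ∈ S, X * mpinv ρ * Y ∈ S) ∧
    (∀ X ∈ S, msqrt ρ * X * mpinv (msqrt ρ) ∈ S)}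

/-- `ρ` is globally asymptotically stable for the generator `L`: it is invariant and every
solution of `ẋ = L(x)` starting at a density operator converges to `ρ` as `t → ∞`. -/
def IsGAS (L : Matrix ι ι ℂ →ₗ[ℂ] Matrix ι ι ℂ) (ρ : Matrix ι ι ℂ) : Prop :=
  L ρ = 0 ∧
  ∀ σ : Matrix ι ι ℂ, IsDensity σ →
    ∀ x : ℝ → Matrix ι ι ℂ, x 0 = σ →
      (∀ t : ℝ, ∀ i j, HasDerivAt (fun s : ℝ => x s i j) (L (x t) i j) t) →
      ∀ i j, Filter.Tendsto (fun t : ℝ => x t i j) Filter.atTop (nhds (ρ i j))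

end Single

/-! ### Bipartite notions -/

section Bipartite

variable {α β : Type*} [Fintype α] [Fintype β] [DecidableEq α] [DecidableEq β]

/-- Partial trace over the second factor. -/
noncomputable def ptraceB (ρ : Matrix (α × β) (α × β) ℂ) : Matrix α α ℂ :=
  Matrix.of fun i j => ∑ k : β, ρ (i, k) (j, k)

/-- The operator Schmidt span of `ρ` on the first factor:
`{Tr_B[(I ⊗ B) ρ] : B ∈ B(H_B)}`. -/
noncomputable def opSchmidtA (ρ : Matrix (α × β) (α × β) ℂ) : Set (Matrix α α ℂ) :=
  {A | ∃ B : Matrix β β ℂ,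
    A = ptraceB ((Matrix.kroneckerMap (· * ·) (1 : Matrix α α ℂ) B) * ρ)}

/-- The (vector) Schmidt span of `v ∈ V_A ⊗ V_B` relative to `V_A`: the image of `v`
under partial inner products with vectors of `V_B`. -/
def vSchmidtA (v : α × β → ℂ) : Set (α → ℂ) :=
  {w | ∃ b : β → ℂ, w = fun a => ∑ j, (starRingEnd ℂ) (b j) * v (a, j)}

/-- `Σ_A(v) ⊗ V_B` as a subspace of `V_A ⊗ V_B`. -/
noncomputable def extVSchmidtA (v : α × β → ℂ) : Submodule ℂ (α × β → ℂ) :=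
  Submodule.span ℂ {v' | ∃ w ∈ vSchmidtA v, ∃ b : β → ℂ, v' = fun p => w p.1 * b p.2}

end Bipartite

/-! ### Multipartite notions -/

section Multipartite

variable {n : ℕ} {d : Fin n → Type*} [∀ a, Fintype (d a)] [∀ a, DecidableEq (d a)]

/-- Index type of the neighborhood factor `H_N`. -/
abbrev nbhdIdx (d : Fin n → Type*) (N : Finset (Fin n)) : Type _ :=
  ∀ a : {x : Fin n // x ∈ N}, d a

/-- Index type of the complementary factor `H_N̄`. -/
abbrev nbhdCoIdx (d : Fin n → Type*) (N : Finset (Fin n)) : Type _ :=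
  ∀ a : {x : Fin n // ¬ x ∈ N}, d a

/-- The factorization `H ≃ H_N ⊗ H_N̄` at the level of index types. -/
def splitEquiv (d : Fin n → Type*) (N : Finset (Fin n)) :
    (∀ a, d a) ≃ nbhdIdx d N × nbhdCoIdx d N :=
  Equiv.piEquivPiSubtypeProd (fun x => x ∈ N) d

variable (d)

/-- The operator `A ⊗ B` on `H = H_N ⊗ H_N̄`, viewed as an operator on `H`. -/
noncomputable def splitLift (N : Finset (Fin n))
    (A : Matrix (nbhdIdx d N) (nbhdIdx d N) ℂ)
    (B : Matrix (nbhdCoIdx d N) (nbhdCoIdx d N) ℂ) :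
    Matrix (∀ a, d a) (∀ a, d a) ℂ :=
  (Matrix.kroneckerMap (· * ·) A B).submatrix (splitEquiv d N) (splitEquiv d N)

/-- The neighborhood operator `A ⊗ I_N̄` on `H`. -/
noncomputable def nbhdLift (N : Finset (Fin n))
    (A : Matrix (nbhdIdx d N) (nbhdIdx d N) ℂ) : Matrix (∀ a, d a) (∀ a, d a) ℂ :=
  splitLift d N A 1

/-- The operator `I_N ⊗ B` on `H`. -/
noncomputable def coLift (N : Finset (Fin n))
    (B : Matrix (nbhdCoIdx d N) (nbhdCoIdx d N) ℂ) : Matrix (∀ a, d a) (∀ a, d a) ℂ :=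
  splitLift d N 1 B

/-- The reduced state `ρ_N = Tr_N̄(ρ)` on the neighborhood `N`. -/
noncomputable def nbhdPtrace (N : Finset (Fin n)) (ρ : Matrix (∀ a, d a) (∀ a, d a) ℂ) :
    Matrix (nbhdIdx d N) (nbhdIdx d N) ℂ :=
  Matrix.of fun i j => ∑ k : nbhdCoIdx d N,
    ρ ((splitEquiv d N).symm (i, k)) ((splitEquiv d N).symm (j, k))

/-- The operator Schmidt span of `ρ` on the neighborhood `N`:
`Σ_N(ρ) = {Tr_N̄[(I_N ⊗ B) ρ] : B}`. -/
noncomputable def nbhdSchmidt (N : Finset (Fin n)) (ρ : Matrix (∀ a, d a) (∀ a, d a) ℂ) :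
    Set (Matrix (nbhdIdx d N) (nbhdIdx d N) ℂ) :=
  {A | ∃ B : Matrix (nbhdCoIdx d N) (nbhdCoIdx d N) ℂ,
    A = nbhdPtrace d N (coLift d N B * ρ)}

/-- The extended minimal modular-invariant distorted algebra
`F_{ρ_N}(Σ_N(ρ)) ⊗ B(H_N̄)` as a subspace of `B(H)`. -/
noncomputable def extF (N : Finset (Fin n)) (ρ : Matrix (∀ a, d a) (∀ a, d a) ℂ) :
    Submodule ℂ (Matrix (∀ a, d a) (∀ a, d a) ℂ) :=
  Submodule.span ℂ {X | ∃ A ∈ Fdist (nbhdPtrace d N ρ) (nbhdSchmidt d N ρ),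
    ∃ B : Matrix (nbhdCoIdx d N) (nbhdCoIdx d N) ℂ, X = splitLift d N A B}

/-- A neighborhood QDS generator for `N`: a Lindblad generator whose Hamiltonian and
noise operators all act as `X_N ⊗ I_N̄`. -/
def IsNbhdGen (N : Finset (Fin n))
    (L : Matrix (∀ a, d a) (∀ a, d a) ℂ →ₗ[ℂ] Matrix (∀ a, d a) (∀ a, d a) ℂ) : Prop :=
  ∃ HN : Matrix (nbhdIdx d N) (nbhdIdx d N) ℂ, HN.IsHermitian ∧
    ∃ (m : ℕ) (Lk : Fin m → Matrix (nbhdIdx d N) (nbhdIdx d N) ℂ),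
      L = lindbladMap (nbhdLift d N HN) fun k => nbhdLift d N (Lk k)

/-- A purely dissipative neighborhood generator for `N` (zero Hamiltonian in some
Lindblad representation). -/
def IsDissipNbhdGen (N : Finset (Fin n))
    (L : Matrix (∀ a, d a) (∀ a, d a) ℂ →ₗ[ℂ] Matrix (∀ a, d a) (∀ a, d a) ℂ) : Prop :=
  ∃ (m : ℕ) (Lk : Fin m → Matrix (nbhdIdx d N) (nbhdIdx d N) ℂ),
    L = lindbladMap 0 fun k => nbhdLift d N (Lk k)

/-- The family of neighborhood generators `Lj` is frustration free: every invariant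
state of the sum is invariant for each component. -/
def IsFFFamily {M : ℕ}
    (Lj : Fin M → (Matrix (∀ a, d a) (∀ a, d a) ℂ →ₗ[ℂ] Matrix (∀ a, d a) (∀ a, d a) ℂ)) :
    Prop :=
  ∀ ρ : Matrix (∀ a, d a) (∀ a, d a) ℂ, IsDensity ρ → (∑ j, Lj j) ρ = 0 → ∀ j, Lj j ρ = 0

/-- `ρ` is frustration-free quasi-locally stabilizable relative to the neighborhood
structure `Nb`. -/
def IsFFQLS {M : ℕ} (Nb : Fin M → Finset (Fin n))
    (ρ : Matrix (∀ a, d a) (∀ a, d a) ℂ) : Prop :=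
  ∃ Lj : Fin M → (Matrix (∀ a, d a) (∀ a, d a) ℂ →ₗ[ℂ] Matrix (∀ a, d a) (∀ a, d a) ℂ),
    (∀ j, IsNbhdGen d (Nb j) (Lj j)) ∧ IsFFFamily d Lj ∧ IsGAS (∑ j, Lj j) ρ

/-- A pure state `|ψ⟩⟨ψ|` is dissipatively quasi-locally stabilizable relative to `Nb`:
it is GAS for a QL generator whose components have zero Hamiltonian and neighborhood
noise operators annihilating `ψ`. -/
def IsDQLS {M : ℕ} (Nb : Fin M → Finset (Fin n)) (ψ : (∀ a, d a) → ℂ) : Prop :=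
  ∃ Lj : Fin M → (Matrix (∀ a, d a) (∀ a, d a) ℂ →ₗ[ℂ] Matrix (∀ a, d a) (∀ a, d a) ℂ),
    (∀ j, ∃ (m : ℕ) (Dk : Fin m → Matrix (nbhdIdx d (Nb j)) (nbhdIdx d (Nb j)) ℂ),
      Lj j = lindbladMap 0 (fun k => nbhdLift d (Nb j) (Dk k)) ∧
      ∀ k, (nbhdLift d (Nb j) (Dk k)).mulVec ψ = 0) ∧
    IsGAS (∑ j, Lj j) (Matrix.vecMulVec ψ (star ψ))

/-- The (vector) Schmidt span of `ψ` relative to the neighborhood factor `H_N`. -/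
def vecSchmidt (N : Finset (Fin n)) (ψ : (∀ a, d a) → ℂ) : Set (nbhdIdx d N → ℂ) :=
  {w | ∃ b : nbhdCoIdx d N → ℂ,
    w = fun i => ∑ k, (starRingEnd ℂ) (b k) * ψ ((splitEquiv d N).symm (i, k))}

/-- `Σ_N(ψ) ⊗ H_N̄` as a subspace of `H`. -/
noncomputable def extVecSchmidt (N : Finset (Fin n)) (ψ : (∀ a, d a) → ℂ) :
    Submodule ℂ ((∀ a, d a) → ℂ) :=
  Submodule.span ℂ {v | ∃ w ∈ vecSchmidt d N ψ, ∃ b : nbhdCoIdx d N → ℂ,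
    v = fun x => w ((splitEquiv d N) x).1 * b ((splitEquiv d N) x).2}

end Multipartite

/-!
Write `P` for the support projection of `ρ_N`. The operators of `B(H_N)` that live on `supp ρ_N` and
commute with `F_{ρ_N}(Σ_N(ρ)) ρ_N⁻` form a space stable under the adjoint and under the modular map,
so this space is spanned by modular eigenoperators `K`, and these satisfy `ρ (K ⊗ I) = λ (K ⊗ I) ρ`
with `λ > 0`. The noise operators `√λ K` and `K†` are in detailed balance with respect to `ρ`, and
the operators `|a⟩⟨b| (1 - P)` vanish on `ρ` and drain the complement of `supp ρ_N`. Hence `ρ` is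
invariant for each of the resulting neighborhood generators.

For the sum of these generators, let `Y` be a Heisenberg eigenvector whose eigenvalue has
nonnegative real part. Positivity of the carré du champ on the top eigenspace of `Y† Y` shows that
`Y` is injective on some nonzero subspace that the noise preserves, and commutes with the noise
there. By (ii) every nonzero noise-invariant subspace meets `supp ρ`; on a common vector detailed
balance makes the eigenvalue zero. Invariance of `ρ` then makes `Y` commute with the noise on all of
`supp ρ`, so by the bicommutant theorem `Y ρ` lies in every `F_{ρ_N}(Σ_N(ρ)) ⊗ B(H_N̄)`, and by (i)
`Y ρ = c ρ`. The same argument applied to `Y - c` gives `Y = c`. All other Heisenberg modes decay,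
`ρ` is globally asymptotically stable and, as the only invariant state, invariant for each summand.
-/

section Decay

open Filter Topology

variable {E : Type*} [NormedAddCommGroup E] [NormedSpace ℂ E]

theorem exists_norm_le_mul_exp_of_hasDerivAt {f g : ℝ → E} {μ : ℂ} {c C : ℝ} (hμ : μ.re < c)
    (hf : ∀ t, HasDerivAt f (μ • f t + g t) t)
    (hg : ∀ t, 0 ≤ t → ‖g t‖ ≤ C * Real.exp (c * t)) :
    ∃ C', ∀ t, 0 ≤ t → ‖f t‖ ≤ C' * Real.exp (c * t) := by
  have hδ : 0 < c - μ.re := sub_pos.mpr hμ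
  set h : ℝ → E := fun t => Complex.exp (-μ * t) • f t
  set K : ℝ := ‖f 0‖ + C / (c - μ.re)
  have norm_factor (t : ℝ) : ‖Complex.exp (-μ * t)‖ = Real.exp (-(μ.re * t)) := by
    simp [Complex.norm_exp]
  have hh (t : ℝ) : HasDerivAt h (Complex.exp (-μ * t) • g t) t := by
    have hexp : HasDerivAt (fun s : ℝ => Complex.exp (-μ * s))
        (Complex.exp (-μ * t) * (-μ * 1)) t :=
      ((Complex.ofRealCLM.hasDerivAt (x := t)).const_mul (-μ)).cexp
    refine (hexp.smul (hf t)).congr_deriv ?_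
    module
  have hB (t : ℝ) : HasDerivAt (fun s => K * Real.exp ((c - μ.re) * s))
      (K * (Real.exp ((c - μ.re) * t) * ((c - μ.re) * 1))) t :=
    (((hasDerivAt_id t).const_mul (c - μ.re)).exp).const_mul K
  have h_bound (T t : ℝ) (ht : t ∈ Set.Ico 0 T) : ‖Complex.exp (-μ * t) • g t‖ ≤
      K * (Real.exp ((c - μ.re) * t) * ((c - μ.re) * 1)) := calc
    _ ≤ Real.exp (-(μ.re * t)) * (C * Real.exp (c * t)) := by
      rw [norm_smul, norm_factor]
      exact mul_le_mul_of_nonneg_left (hg t ht.1) (Real.exp_pos _).le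
    _ = C * Real.exp ((c - μ.re) * t) := by
      rw [mul_left_comm, ← Real.exp_add]; ring_nf
    _ ≤ (‖f 0‖ * (c - μ.re) + C) * Real.exp ((c - μ.re) * t) := by
      gcongr; linarith [mul_nonneg (norm_nonneg (f 0)) hδ.le]
    _ = _ := by simp only [K]; field_simp
  have hC : 0 ≤ C := by simpa using (norm_nonneg _).trans (hg 0 le_rfl)
  refine ⟨K, fun t ht => ?_⟩
  have h_le : ‖h t‖ ≤ K * Real.exp ((c - μ.re) * t) :=
    image_norm_le_of_norm_deriv_right_le_deriv_boundary
      (fun s _ => (hh s).continuousAt.continuousWithinAt) (fun s _ => (hh s).hasDerivWithinAt)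
      (by simpa [h, K] using div_nonneg hC hδ.le) hB (h_bound t) ⟨ht, le_rfl⟩
  calc ‖f t‖ = ‖h t‖ * Real.exp (μ.re * t) := by
        rw [norm_smul, norm_factor, mul_right_comm, ← Real.exp_add]; simp
    _ ≤ K * Real.exp ((c - μ.re) * t) * Real.exp (μ.re * t) := by gcongr
    _ = K * Real.exp (c * t) := by rw [mul_assoc, ← Real.exp_add]; ring_nf

variable {V : Type*} [AddCommGroup V] [Module ℂ V]

theorem exists_norm_le_mul_exp_of_pow_sub_apply_eq_zero {D : Module.End ℂ V}
    {φ : V →ₗ[ℂ] ℝ → E} (hφ : ∀ v t, HasDerivAt (φ v) (φ (D v) t) t) {μ : ℂ} {c : ℝ}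
    (hμ : μ.re < c) (k : ℕ) {v : V} (hv : ((D - algebraMap ℂ _ μ) ^ k) v = 0) :
    ∃ C, ∀ t, 0 ≤ t → ‖φ v t‖ ≤ C * Real.exp (c * t) := by
  induction k generalizing v with
  | zero =>
    obtain rfl : v = 0 := by simpa using hv
    exact ⟨0, by simp⟩
  | succ k ih =>
    obtain ⟨C, hC⟩ := ih (v := (D - algebraMap ℂ _ μ) v) (by rwa [pow_succ] at hv)
    refine exists_norm_le_mul_exp_of_hasDerivAt hμ (fun t => ?_) hC
    refine (hφ v t).congr_deriv ?_
    simp [LinearMap.sub_apply, Module.algebraMap_end_apply]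

theorem tendsto_zero_of_forall_hasEigenvalue_re_neg [FiniteDimensional ℂ V]
    {D : Module.End ℂ V} (hD : ∀ μ, D.HasEigenvalue μ → μ.re < 0)
    {φ : V →ₗ[ℂ] ℝ → E} (hφ : ∀ v t, HasDerivAt (φ v) (φ (D v) t) t) (v : V) :
    Tendsto (φ v) atTop (𝓝 0) := by
  have hv : v ∈ ⨆ μ, D.maxGenEigenspace μ :=
    Module.End.iSup_maxGenEigenspace_eq_top D ▸ Submodule.mem_top
  induction hv using Submodule.iSup_induction' with
  | zero => exact (map_zero φ).symm ▸ tendsto_const_nhds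
  | add v w _ _ hv hw => exact (map_add φ v w).symm ▸ add_zero (0 : E) ▸ hv.add hw
  | mem μ v hv =>
    obtain ⟨k, hk⟩ := Module.End.mem_maxGenEigenspace D μ v |>.mp hv
    rcases eq_or_ne v 0 with rfl | hv0
    · exact (map_zero φ).symm ▸ tendsto_const_nhds
    have hμ : μ.re < 0 := by
      refine hD μ (Module.End.hasEigenvalue_of_hasGenEigenvalue (k := k) ?_)
      exact (Submodule.ne_bot_iff _).mpr ⟨v, Module.End.mem_genEigenspace_nat.mpr hk, hv0⟩
    obtain ⟨c, hμc, hc⟩ := exists_between hμ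
    obtain ⟨C, hC⟩ := exists_norm_le_mul_exp_of_pow_sub_apply_eq_zero hφ hμc k hk
    have h_exp : Tendsto (fun t => C * Real.exp (c * t)) atTop (𝓝 0) := by
      simpa using (Real.tendsto_exp_atBot.comp
        (tendsto_id.const_mul_atTop_of_neg hc)).const_mul C
    exact squeeze_zero_norm' (eventually_atTop.mpr ⟨0, hC⟩) h_exp

end Decay

section DualSpectrum

open Filter Topology

variable {ι : Type*} [Fintype ι]

theorem hasDerivAt_trace_mul {x : ℝ → Matrix ι ι ℂ} {x' : Matrix ι ι ℂ} {t : ℝ}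
    (hx : ∀ i j, HasDerivAt (fun s => x s i j) (x' i j) t) (Y : Matrix ι ι ℂ) :
    HasDerivAt (fun s => (Y * x s).trace) (Y * x').trace t :=
  HasDerivAt.fun_sum fun i _ => HasDerivAt.fun_sum fun j _ => (hx j i).const_mul (Y i j)

theorem IsGAS.eq_of_apply_eq_zero {L : Module.End ℂ (Matrix ι ι ℂ)} {ρ σ : Matrix ι ι ℂ}
    (h : IsGAS L ρ) (hσ : IsDensity σ) (hLσ : L σ = 0) : σ = ρ := by
  ext i j
  refine tendsto_nhds_unique tendsto_const_nhds
    (h.2 σ hσ (fun _ => σ) rfl (fun t i j => ?_) i j)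
  simpa [hLσ] using hasDerivAt_const t (σ i j)

theorem trace_eq_of_hasDerivAt {L : Module.End ℂ (Matrix ι ι ℂ)} (hL : ∀ X, (L X).trace = 0)
    {x : ℝ → Matrix ι ι ℂ} (hx : ∀ t i j, HasDerivAt (fun s => x s i j) (L (x t) i j) t) (t : ℝ) :
    (x t).trace = (x 0).trace := by
  classical
  have hderiv (t : ℝ) : HasDerivAt (fun s => (1 * x s).trace) 0 t :=
    (hasDerivAt_trace_mul (hx t) 1).congr_deriv (by rw [one_mul, hL])
  simpa using is_const_of_deriv_eq_zero (fun t => (hderiv t).differentiableAt)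
    (fun t => (hderiv t).deriv) t 0

variable [DecidableEq ι]

theorem isGAS_of_dual {L D : Module.End ℂ (Matrix ι ι ℂ)} {ρ : Matrix ι ι ℂ}
    (hdual : ∀ Y X, (D Y * X).trace = (Y * L X).trace) (hone : D 1 = 0)
    (hρ : L ρ = 0) (htr : ρ.trace = 1)
    (hspec : ∀ (μ : ℂ) (Y : Matrix ι ι ℂ), 0 ≤ μ.re → Y ≠ 0 → D Y = μ • Y →
      ∃ c : ℂ, Y = c • 1) :
    IsGAS L ρ := by
  let τ : Matrix ι ι ℂ →ₗ[ℂ] ℂ := traceLinearMap ι ℂ ℂ ∘ₗ LinearMap.mulRight ℂ ρ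
  have hDτ (Y : Matrix ι ι ℂ) : τ (D Y) = 0 := (hdual Y ρ).trans (by simp [hρ])
  let D₀ : Module.End ℂ (LinearMap.ker τ) := D.restrict fun Y _ => hDτ Y
  have hD₀ (μ : ℂ) (hμ : D₀.HasEigenvalue μ) : μ.re < 0 := by
    by_contra! hre
    obtain ⟨Y, hY⟩ := hμ.exists_hasEigenvector
    have hY0 : (Y : Matrix ι ι ℂ) ≠ 0 := by simpa using hY.2
    obtain ⟨c, hc⟩ := hspec μ Y hre hY0 (congrArg Subtype.val hY.apply_eq_smul)
    have hτY : τ (Y : Matrix ι ι ℂ) = 0 := Y.2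
    have hc0 : c = 0 := by simpa [τ, hc, htr] using hτY
    exact hY0 (by rw [hc, hc0, zero_smul])
  refine ⟨hρ, fun σ hσ x hx0 hx i j => ?_⟩
  have htrace (t : ℝ) : (x t).trace = 1 := by
    rw [trace_eq_of_hasDerivAt (fun X => ?_) hx t, hx0, hσ.2]
    rw [← one_mul (L X), ← hdual, hone, zero_mul, trace_zero]
  let φ : LinearMap.ker τ →ₗ[ℂ] ℝ → ℂ :=
    { toFun := fun Y t => (Y * (x t - ρ)).trace
      map_add' := fun Y Z => by ext t; simp [add_mul]
      map_smul' := fun c Y => by ext t; simp }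
  have hφ (Y : LinearMap.ker τ) (t : ℝ) : HasDerivAt (φ Y) (φ (D₀ Y) t) t := by
    have hDρ : (D Y * ρ).trace = 0 := hDτ Y
    refine (hasDerivAt_trace_mul (x := fun s => x s - ρ)
      (fun i j => (hx t i j).sub_const (ρ i j)) Y).congr_deriv ?_
    change _ = (D Y * (x t - ρ)).trace
    rw [mul_sub, trace_sub, hDρ, sub_zero, hdual]
  let Y : Matrix ι ι ℂ := single j i 1
  have hY₀ : Y - τ Y • 1 ∈ LinearMap.ker τ := by simp [τ, sub_mul, htr]
  have hlim : Tendsto (fun t => x t i j - ρ i j) atTop (𝓝 0) := by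
    refine (tendsto_zero_of_forall_hasEigenvalue_re_neg hD₀ hφ ⟨_, hY₀⟩).congr fun t => ?_
    change ((Y - τ Y • 1) * (x t - ρ)).trace = _
    simp [Y, sub_mul, htrace t, htr, trace_single_mul]
  simpa using hlim.add_const (ρ i j)

end DualSpectrum

section Positivity

variable {ι : Type*} [Fintype ι]

theorem mul_eq_zero_of_trace_conjTranspose_mul_self_mul {ρ : Matrix ι ι ℂ} (hρ : ρ.PosSemidef)
    {C : Matrix ι ι ℂ} (h : (Cᴴ * C * ρ).trace = 0) : C * ρ = 0 := by
  have hCρC : C * ρ * Cᴴ = 0 := by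
    rwa [Matrix.mul_assoc, trace_mul_comm, (hρ.mul_mul_conjTranspose_same C).trace_eq_zero_iff] at h
  classical
  have hρC : ρ * Cᴴ = 0 := by
    refine ext_of_mulVec_single fun i => ?_
    rw [← mulVec_mulVec, zero_mulVec, ← hρ.dotProduct_mulVec_zero_iff, star_mulVec,
      ← dotProduct_mulVec, conjTranspose_conjTranspose, mulVec_mulVec, mulVec_mulVec, hCρC,
      zero_mulVec, dotProduct_zero]
  simpa [hρ.1.eq] using congrArg conjTranspose hρC

theorem exists_max_eigenvalue_of_posSemidef [DecidableEq ι] {Z : Matrix ι ι ℂ}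
    (hZ : Z.PosSemidef) (hZ0 : Z ≠ 0) :
    ∃ z : ℂ, 0 < z ∧ (z • 1 - Z).PosSemidef ∧ ∃ v, v ≠ 0 ∧ Z *ᵥ v = z • v := by
  open scoped MatrixOrder in
  have : Nonempty ι := by
    by_contra! h
    exact hZ0 (Subsingleton.elim _ _)
  obtain ⟨i, hi⟩ := Finite.exists_max hZ.1.eigenvalues
  have hnonneg := hZ.eigenvalues_nonneg
  have hpos : 0 < hZ.1.eigenvalues i := by
    refine (hnonneg i).lt_of_ne' fun h0 => hZ0 (hZ.1.eigenvalues_eq_zero_iff.mp ?_)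
    exact funext fun j => le_antisymm ((hi j).trans h0.le) (hnonneg j)
  refine ⟨hZ.1.eigenvalues i, by exact_mod_cast hpos, ?_, hZ.1.eigenvectorBasis i, ?_, ?_⟩
  · have hle : Z ≤ algebraMap ℝ _ (hZ.1.eigenvalues i) := by
      refine le_algebraMap_of_spectrum_le ?_ (ha := hZ.1.isSelfAdjoint)
      rw [hZ.1.spectrum_real_eq_range_eigenvalues]
      rintro _ ⟨j, rfl⟩
      exact hi j
    simpa [Algebra.algebraMap_eq_smul_one] using Matrix.le_iff.mp hle
  · simpa using hZ.1.eigenvectorBasis.orthonormal.ne_zero i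
  · simpa using hZ.1.mulVec_eigenvectorBasis i

end Positivity

section Dissipator

variable {ι κ : Type*} [Fintype ι] [DecidableEq ι] [Fintype κ]

/-- The Lindblad generator with noise operators `R k` and no Hamiltonian, with noise operators
indexed by an arbitrary finite type. -/
noncomputable def dissipator (R : κ → Matrix ι ι ℂ) : Module.End ℂ (Matrix ι ι ℂ) :=
  ∑ k, (LinearMap.mulRight ℂ (R k)ᴴ ∘ₗ LinearMap.mulLeft ℂ (R k) -
    ((1 : ℂ) / 2) • (LinearMap.mulLeft ℂ ((R k)ᴴ * R k) + LinearMap.mulRight ℂ ((R k)ᴴ * R k)))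

/-- The generator of the Heisenberg picture: the adjoint of `dissipator R` for the pairing
`(Y, X) ↦ tr (Y * X)`. -/
noncomputable def dualDissipator (R : κ → Matrix ι ι ℂ) : Module.End ℂ (Matrix ι ι ℂ) :=
  ∑ k, (LinearMap.mulRight ℂ (R k) ∘ₗ LinearMap.mulLeft ℂ (R k)ᴴ -
    ((1 : ℂ) / 2) • (LinearMap.mulLeft ℂ ((R k)ᴴ * R k) + LinearMap.mulRight ℂ ((R k)ᴴ * R k)))

variable (R : κ → Matrix ι ι ℂ)

theorem dissipator_apply (X : Matrix ι ι ℂ) :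
    dissipator R X = ∑ k, (R k * X * (R k)ᴴ -
      ((1 : ℂ) / 2) • ((R k)ᴴ * R k * X + X * ((R k)ᴴ * R k))) := by
  rw [dissipator, LinearMap.sum_apply]
  rfl

theorem dualDissipator_apply (Y : Matrix ι ι ℂ) :
    dualDissipator R Y = ∑ k, ((R k)ᴴ * Y * R k -
      ((1 : ℂ) / 2) • ((R k)ᴴ * R k * Y + Y * ((R k)ᴴ * R k))) := by
  rw [dualDissipator, LinearMap.sum_apply]
  rfl

theorem trace_dualDissipator_mul (Y X : Matrix ι ι ℂ) :
    (dualDissipator R Y * X).trace = (Y * dissipator R X).trace := by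
  simp only [dualDissipator_apply, dissipator_apply, Finset.sum_mul, Finset.mul_sum, trace_sum]
  refine Finset.sum_congr rfl fun k _ => ?_
  have h_sandwich : ((R k)ᴴ * Y * R k * X).trace = (Y * (R k * X * (R k)ᴴ)).trace := by
    rw [Matrix.mul_assoc, Matrix.mul_assoc, trace_mul_comm]
    simp only [Matrix.mul_assoc]
  have h_left : ((R k)ᴴ * R k * Y * X).trace = (Y * (X * ((R k)ᴴ * R k))).trace := by
    rw [Matrix.mul_assoc, trace_mul_comm, Matrix.mul_assoc]
  simp only [sub_mul, mul_sub, add_mul, mul_add, smul_mul_assoc, mul_smul_comm, trace_sub,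
    trace_add, trace_smul, h_sandwich, h_left]
  rw [Matrix.mul_assoc Y, add_comm]

theorem dualDissipator_one : dualDissipator R 1 = 0 := by
  rw [dualDissipator_apply]
  refine Finset.sum_eq_zero fun k _ => ?_
  simp only [mul_one, one_mul]
  module

theorem dualDissipator_conjTranspose (Y : Matrix ι ι ℂ) :
    dualDissipator R Yᴴ = (dualDissipator R Y)ᴴ := by
  simp [dualDissipator_apply, conjTranspose_sum, Matrix.mul_assoc, add_comm]

theorem dualDissipator_conjTranspose_mul_self (Y : Matrix ι ι ℂ) :
    dualDissipator R (Yᴴ * Y) = (dualDissipator R Y)ᴴ * Y + Yᴴ * dualDissipator R Y +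
      ∑ k, (R k * Y - Y * R k)ᴴ * (R k * Y - Y * R k) := by
  rw [← dualDissipator_conjTranspose]
  simp only [dualDissipator_apply, Finset.sum_mul, Finset.mul_sum, ← Finset.sum_add_distrib]
  refine Finset.sum_congr rfl fun k _ => ?_
  simp only [conjTranspose_sub, conjTranspose_mul, sub_mul, mul_sub, add_mul, mul_add,
    smul_mul_assoc, mul_smul_comm, Matrix.mul_assoc]
  module

theorem dotProduct_dualDissipator_mulVec {W : Matrix ι ι ℂ} (hW : W.IsHermitian) {v : ι → ℂ}
    (hv : W *ᵥ v = 0) :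
    star v ⬝ᵥ dualDissipator R W *ᵥ v = ∑ k, star (R k *ᵥ v) ⬝ᵥ W *ᵥ (R k *ᵥ v) := by
  have hWv (x : ι → ℂ) : star v ⬝ᵥ W *ᵥ x = 0 := by
    rw [dotProduct_mulVec, ← hW.eq, ← star_mulVec, hv, star_zero, zero_dotProduct]
  rw [dualDissipator_apply, sum_mulVec, dotProduct_sum]
  refine Finset.sum_congr rfl fun k _ => ?_
  simp only [sub_mulVec, smul_mulVec, add_mulVec, dotProduct_sub, dotProduct_smul, dotProduct_add,
    ← mulVec_mulVec, hv, hWv, mulVec_zero, dotProduct_zero, star_mulVec, dotProduct_mulVec,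
    add_zero, smul_zero, sub_zero]

variable {R}

theorem mulVec_eq_zero_of_dualDissipator_add_eq_zero {W A : Matrix ι ι ℂ}
    {C : κ → Matrix ι ι ℂ} (hW : W.PosSemidef) (hA : A.PosSemidef)
    (h : dualDissipator R W + (A + ∑ k, (C k)ᴴ * C k) = 0) {v : ι → ℂ} (hv : W *ᵥ v = 0)
    (k : κ) : W *ᵥ (R k *ᵥ v) = 0 ∧ C k *ᵥ v = 0 := by
  have hR_nonneg (k : κ) : 0 ≤ star (R k *ᵥ v) ⬝ᵥ W *ᵥ (R k *ᵥ v) :=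
    hW.dotProduct_mulVec_nonneg _
  have hC_nonneg (k : κ) : 0 ≤ star (C k *ᵥ v) ⬝ᵥ (C k *ᵥ v) := dotProduct_star_self_nonneg _
  have hA_nonneg : 0 ≤ star v ⬝ᵥ A *ᵥ v := hA.dotProduct_mulVec_nonneg v
  have hsum : ∑ k, star (R k *ᵥ v) ⬝ᵥ W *ᵥ (R k *ᵥ v) +
      (star v ⬝ᵥ A *ᵥ v + ∑ k, star (C k *ᵥ v) ⬝ᵥ (C k *ᵥ v)) = 0 := by
    have hquad := congrArg (fun A : Matrix ι ι ℂ => star v ⬝ᵥ A *ᵥ v) h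
    rw [← dotProduct_dualDissipator_mulVec R hW.1 hv]
    simpa only [add_mulVec, sum_mulVec, ← mulVec_mulVec, dotProduct_add, dotProduct_sum,
      star_mulVec, ← dotProduct_mulVec, zero_mulVec, dotProduct_zero] using hquad
  obtain ⟨hR0, hrest⟩ := (add_eq_zero_iff_of_nonneg (Finset.sum_nonneg fun k _ => hR_nonneg k)
    (add_nonneg hA_nonneg (Finset.sum_nonneg fun k _ => hC_nonneg k))).mp hsum
  have hC0 := ((add_eq_zero_iff_of_nonneg hA_nonneg
    (Finset.sum_nonneg fun k _ => hC_nonneg k)).mp hrest).2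
  rw [Finset.sum_eq_zero_iff_of_nonneg fun k _ => hR_nonneg k] at hR0
  rw [Finset.sum_eq_zero_iff_of_nonneg fun k _ => hC_nonneg k] at hC0
  exact ⟨(hW.dotProduct_mulVec_zero_iff _).mp (hR0 k (Finset.mem_univ k)),
    dotProduct_star_self_eq_zero.mp (hC0 k (Finset.mem_univ k))⟩

theorem exists_invariant_submodule_of_dualDissipator_eq_smul {Y : Matrix ι ι ℂ} {μ : ℂ}
    (hY : Y ≠ 0) (hμ : 0 ≤ μ.re) (h : dualDissipator R Y = μ • Y) :
    ∃ V : Submodule ℂ (ι → ℂ), V ≠ ⊥ ∧ (∀ v ∈ V, ∀ k, R k *ᵥ v ∈ V) ∧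
      (∀ v ∈ V, ∀ k, R k *ᵥ (Y *ᵥ v) = Y *ᵥ (R k *ᵥ v)) ∧ ∀ v ∈ V, Y *ᵥ v = 0 → v = 0 := by
  obtain ⟨z, hz, hW, v₀, hv₀, hZv₀⟩ := exists_max_eigenvalue_of_posSemidef
    (posSemidef_conjTranspose_mul_self Y) (conjTranspose_mul_self_eq_zero.not.mpr hY)
  set W : Matrix ι ι ℂ := z • 1 - Yᴴ * Y with hWdef
  have hμ' : 0 ≤ star μ + μ := by
    rw [Complex.star_def, add_comm, Complex.add_conj]
    exact_mod_cast mul_nonneg zero_le_two hμ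
  have hDW : dualDissipator R W + ((star μ + μ) • (Yᴴ * Y) +
      ∑ k, (R k * Y - Y * R k)ᴴ * (R k * Y - Y * R k)) = 0 := by
    rw [hWdef, map_sub, map_smul, dualDissipator_one, dualDissipator_conjTranspose_mul_self, h,
      conjTranspose_smul, smul_mul_assoc, mul_smul_comm]
    module
  have hker {v : ι → ℂ} (hv : W *ᵥ v = 0) (k : κ) :=
    mulVec_eq_zero_of_dualDissipator_add_eq_zero hW
      ((posSemidef_conjTranspose_mul_self Y).smul hμ') hDW hv k
  have hW_apply (v : ι → ℂ) : W *ᵥ v = z • v - Yᴴ *ᵥ (Y *ᵥ v) := by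
    simp [hWdef, sub_mulVec, smul_mulVec]
  refine ⟨LinearMap.ker W.mulVecLin, (Submodule.ne_bot_iff _).mpr ⟨v₀, ?_, hv₀⟩,
    fun v hv k => (hker hv k).1, fun v hv k => ?_, fun v hv hYv => ?_⟩
  · simp [hW_apply, hZv₀]
  · simpa [sub_mulVec, sub_eq_zero] using (hker hv k).2
  · have hzv : z • v = 0 := by simpa [hW_apply, hYv] using hv
    exact (smul_eq_zero.mp hzv).resolve_left hz.ne'

theorem commutator_mul_eq_zero_of_dualDissipator_eq_zero {ρ : Matrix ι ι ℂ}
    (hρ : ρ.PosSemidef) (hRρ : dissipator R ρ = 0) {Y : Matrix ι ι ℂ}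
    (hY : dualDissipator R Y = 0) (k : κ) : (R k * Y - Y * R k) * ρ = 0 := by
  have hnonneg (k : κ) :
      0 ≤ ((R k * Y - Y * R k)ᴴ * (R k * Y - Y * R k) * ρ).trace := by
    rw [Matrix.mul_assoc, trace_mul_comm]
    exact (hρ.mul_mul_conjTranspose_same _).trace_nonneg
  have hsum : ∑ k, ((R k * Y - Y * R k)ᴴ * (R k * Y - Y * R k) * ρ).trace = 0 := calc
    _ = (dualDissipator R (Yᴴ * Y) * ρ).trace := by
      rw [dualDissipator_conjTranspose_mul_self, hY]
      simp [Finset.sum_mul, trace_sum]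
    _ = 0 := by rw [trace_dualDissipator_mul, hRρ, mul_zero, trace_zero]
  rw [Finset.sum_eq_zero_iff_of_nonneg fun k _ => hnonneg k] at hsum
  exact mul_eq_zero_of_trace_conjTranspose_mul_self_mul hρ (hsum k (Finset.mem_univ k))

theorem dualDissipator_mulVec_eq_zero {V : Submodule ℂ (ι → ℂ)} {Y : Matrix ι ι ℂ}
    (hV : ∀ v ∈ V, ∀ k, R k *ᵥ v ∈ V)
    (hcomm : ∀ v ∈ V, ∀ k, R k *ᵥ (Y *ᵥ v) = Y *ᵥ (R k *ᵥ v)) {v : ι → ℂ} (hv : v ∈ V)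
    (hadj : ∀ k, R k *ᵥ v = 0 ∨ ∃ (c : ℂ) (k' : κ), (R k)ᴴ = c • R k') :
    dualDissipator R Y *ᵥ v = 0 := by
  rw [dualDissipator_apply, sum_mulVec]
  refine Finset.sum_eq_zero fun k _ => ?_
  have hadj_comm : (R k)ᴴ *ᵥ (R k *ᵥ (Y *ᵥ v)) = Y *ᵥ ((R k)ᴴ *ᵥ (R k *ᵥ v)) := by
    rcases hadj k with h0 | ⟨c, k', hk⟩
    · rw [hcomm v hv, h0]
      simp only [mulVec_zero]
    · rw [hk, smul_mulVec, smul_mulVec, mulVec_smul, hcomm v hv, hcomm _ (hV v hv k)]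
  simp only [sub_mulVec, smul_mulVec, add_mulVec, ← mulVec_mulVec, ← hadj_comm, hcomm v hv k]
  module

theorem exists_eq_smul_one_of_dualDissipator_eq_smul {ρ : Matrix ι ι ℂ} (hρ : ρ.PosSemidef)
    (hRρ : dissipator R ρ = 0)
    (hinv : ∀ V : Submodule ℂ (ι → ℂ), V ≠ ⊥ → (∀ v ∈ V, ∀ k, R k *ᵥ v ∈ V) →
      ∃ w, ρ *ᵥ w ∈ V ∧ ρ *ᵥ w ≠ 0)
    (hcomm : ∀ Y : Matrix ι ι ℂ, (∀ k, (R k * Y - Y * R k) * ρ = 0) →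
      (∀ k, (R k * Yᴴ - Yᴴ * R k) * ρ = 0) → ∃ c : ℂ, Y * ρ = c • ρ)
    (hadj : ∀ k, R k * ρ = 0 ∨ ∃ (c : ℂ) (k' : κ), (R k)ᴴ = c • R k')
    {Y : Matrix ι ι ℂ} {μ : ℂ} (hY : Y ≠ 0) (hμ : 0 ≤ μ.re) (h : dualDissipator R Y = μ • Y) :
    ∃ c : ℂ, Y = c • 1 := by
  have hμ0 : μ = 0 := by
    obtain ⟨V, hVbot, hV, hYcomm, hYinj⟩ :=
      exists_invariant_submodule_of_dualDissipator_eq_smul hY hμ h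
    obtain ⟨w, hw, hw0⟩ := hinv V hVbot hV
    have hDY : dualDissipator R Y *ᵥ (ρ *ᵥ w) = 0 :=
      dualDissipator_mulVec_eq_zero hV hYcomm hw fun k =>
        (hadj k).imp_left fun hk => by rw [mulVec_mulVec, hk, zero_mulVec]
    rw [h, smul_mulVec] at hDY
    exact (smul_eq_zero.mp hDY).resolve_right (mt (hYinj _ hw) hw0)
  have hDY : dualDissipator R Y = 0 := by rw [h, hμ0, zero_smul]
  have hDYH : dualDissipator R Yᴴ = 0 := by
    rw [dualDissipator_conjTranspose, hDY, conjTranspose_zero]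
  obtain ⟨c, hc⟩ := hcomm Y (commutator_mul_eq_zero_of_dualDissipator_eq_zero hρ hRρ hDY)
    (commutator_mul_eq_zero_of_dualDissipator_eq_zero hρ hRρ hDYH)
  refine ⟨c, sub_eq_zero.mp ?_⟩
  by_contra hne
  obtain ⟨V, hVbot, hV, -, hinj⟩ := exists_invariant_submodule_of_dualDissipator_eq_smul
    (R := R) (μ := 0) hne le_rfl (by rw [map_sub, map_smul, dualDissipator_one, hDY]; simp)
  obtain ⟨w, hw, hw0⟩ := hinv V hVbot hV
  refine hw0 (hinj _ hw ?_)
  rw [mulVec_mulVec, sub_mul, hc, smul_mul_assoc, one_mul, sub_self, zero_mulVec]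

theorem isGAS_dissipator {ρ : Matrix ι ι ℂ} (hρ : IsDensity ρ)
    (hRρ : dissipator R ρ = 0)
    (hinv : ∀ V : Submodule ℂ (ι → ℂ), V ≠ ⊥ → (∀ v ∈ V, ∀ k, R k *ᵥ v ∈ V) →
      ∃ w, ρ *ᵥ w ∈ V ∧ ρ *ᵥ w ≠ 0)
    (hcomm : ∀ Y : Matrix ι ι ℂ, (∀ k, (R k * Y - Y * R k) * ρ = 0) →
      (∀ k, (R k * Yᴴ - Yᴴ * R k) * ρ = 0) → ∃ c : ℂ, Y * ρ = c • ρ)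
    (hadj : ∀ k, R k * ρ = 0 ∨ ∃ (c : ℂ) (k' : κ), (R k)ᴴ = c • R k') :
    IsGAS (dissipator R) ρ :=
  isGAS_of_dual (trace_dualDissipator_mul R) (dualDissipator_one R) hRρ hρ.2
    fun _ _ hμ hY h => exists_eq_smul_one_of_dualDissipator_eq_smul hρ.1 hRρ hinv hcomm hadj hY hμ h

theorem lindbladMap_zero_eq_dissipator {m : ℕ} (R : Fin m → Matrix ι ι ℂ) :
    lindbladMap 0 R = dissipator R := by
  simp [lindbladMap, dissipator]

theorem dissipator_comp_equiv {κ' : Type*} [Fintype κ'] (e : κ' ≃ κ) :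
    dissipator (R ∘ e) = dissipator R :=
  e.sum_comp fun k => LinearMap.mulRight ℂ (R k)ᴴ ∘ₗ LinearMap.mulLeft ℂ (R k) -
    ((1 : ℂ) / 2) • (LinearMap.mulLeft ℂ ((R k)ᴴ * R k) + LinearMap.mulRight ℂ ((R k)ᴴ * R k))

theorem dissipator_sigma {σ : Type*} [Fintype σ] {κ : σ → Type*} [∀ j, Fintype (κ j)]
    (R : ∀ j, κ j → Matrix ι ι ℂ) :
    dissipator (fun p : Σ j, κ j => R p.1 p.2) = ∑ j, dissipator (R j) :=
  Fintype.sum_sigma _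

end Dissipator

section InvariantState

variable {ι κ κ' : Type*} [Fintype ι] [Fintype κ] [Fintype κ'] {ρ X : Matrix ι ι ℂ}

theorem conjTranspose_mul_eq_smul_mul (hρ : ρ.IsHermitian) {c : ℝ}
    (h : ρ * X = (c : ℂ) • (X * ρ)) : Xᴴ * ρ = (c : ℂ) • (ρ * Xᴴ) := by
  simpa [hρ.eq] using congrArg conjTranspose h

variable [DecidableEq ι]

theorem dissipator_sumElim (R : κ → Matrix ι ι ℂ) (S : κ' → Matrix ι ι ℂ) :
    dissipator (Sum.elim R S) = dissipator R + dissipator S :=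
  Fintype.sum_sum_type _

theorem dissipator_apply_eq_zero_of_mul_eq_zero {R : κ → Matrix ι ι ℂ} (hρ : ρ.IsHermitian)
    (h : ∀ k, R k * ρ = 0) : dissipator R ρ = 0 := by
  rw [dissipator_apply]
  refine Finset.sum_eq_zero fun k _ => ?_
  have h' : ρ * (R k)ᴴ = 0 := by simpa [hρ.eq] using congrArg conjTranspose (h k)
  rw [h k, mul_assoc, h k, ← mul_assoc, h']
  simp

theorem dissipator_apply_eq_zero_of_detailedBalance {lam : κ → ℝ} {K : κ → Matrix ι ι ℂ}
    (hρ : ρ.IsHermitian) (hlam : ∀ k, 0 ≤ lam k)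
    (h : ∀ k, ρ * K k = (lam k : ℂ) • (K k * ρ)) :
    dissipator (Sum.elim (fun k => (√(lam k) : ℂ) • K k) fun k => (K k)ᴴ) ρ = 0 := by
  rw [dissipator_sumElim, LinearMap.add_apply, dissipator_apply, dissipator_apply,
    ← Finset.sum_add_distrib]
  refine Finset.sum_eq_zero fun k _ => ?_
  have hK := h k
  have hK' := conjTranspose_mul_eq_smul_mul hρ hK
  have hsq : (√(lam k) : ℂ) * √(lam k) = lam k := by
    rw [← Complex.ofReal_mul, Real.mul_self_sqrt (hlam k)]
  have h_sandwich : (K k)ᴴ * ρ * K k = (lam k : ℂ) • ((K k)ᴴ * K k * ρ) := by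
    rw [mul_assoc, hK, mul_smul_comm, mul_assoc]
  have h_sandwich' : (lam k : ℂ) • (K k * ρ * (K k)ᴴ) = ρ * (K k * (K k)ᴴ) := by
    rw [← mul_assoc, hK, smul_mul_assoc]
  have h_left : (lam k : ℂ) • (ρ * ((K k)ᴴ * K k)) = (lam k : ℂ) • ((K k)ᴴ * K k * ρ) := by
    rw [← mul_assoc, ← smul_mul_assoc, ← hK', h_sandwich]
  have h_right : K k * (K k)ᴴ * ρ = ρ * (K k * (K k)ᴴ) := by
    rw [mul_assoc, hK', mul_smul_comm, ← mul_assoc, h_sandwich']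
  simp only [conjTranspose_smul, conjTranspose_conjTranspose, smul_mul_assoc, mul_smul_comm,
    smul_smul, Complex.star_def, Complex.conj_ofReal, hsq,
    h_sandwich, h_sandwich', h_left, h_right]
  module

end InvariantState

section MoorePenrose

/-- `b` is the Moore–Penrose inverse of `a`: the four Penrose conditions. -/
structure IsMoorePenrose {R : Type*} [Mul R] [Star R] (a b : R) : Prop where
  mul_inv_mul_self : a * b * a = a
  inv_mul_mul_inv : b * a * b = b
  star_mul_inv : star (a * b) = a * b
  star_inv_mul : star (b * a) = b * a

namespace IsMoorePenrose

variable {R S F : Type*} [Semigroup R] [StarMul R]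

theorem unique {a b c : R} (hb : IsMoorePenrose a b) (hc : IsMoorePenrose a c) : b = c := by
  have hab : a * b = a * c := calc
    a * b = star (a * c * (a * b)) := by
      rw [← mul_assoc, hc.mul_inv_mul_self, hb.star_mul_inv]
    _ = a * c := by
      rw [star_mul, hb.star_mul_inv, hc.star_mul_inv, ← mul_assoc, hb.mul_inv_mul_self]
  have hba : b * a = c * a := calc
    b * a = star (b * a * (c * a)) := by
      rw [mul_assoc, ← mul_assoc a, hc.mul_inv_mul_self, hb.star_inv_mul]
    _ = c * a := by
      rw [star_mul, hb.star_inv_mul, hc.star_inv_mul, mul_assoc, ← mul_assoc a,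
        hb.mul_inv_mul_self]
  rw [← hb.inv_mul_mul_inv, mul_assoc, hab, ← mul_assoc, hba, hc.inv_mul_mul_inv]

protected theorem star {a b : R} (h : IsMoorePenrose a b) : IsMoorePenrose (star a) (star b) where
  mul_inv_mul_self := by rw [← star_mul, ← star_mul, ← mul_assoc, h.mul_inv_mul_self]
  inv_mul_mul_inv := by rw [← star_mul, ← star_mul, ← mul_assoc, h.inv_mul_mul_inv]
  star_mul_inv := by rw [← star_mul, h.star_inv_mul, h.star_inv_mul]
  star_inv_mul := by rw [← star_mul, h.star_mul_inv, h.star_mul_inv]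

theorem map [Semigroup S] [StarMul S] [FunLike F R S] [MulHomClass F R S] [StarHomClass F R S]
    (f : F) {a b : R} (h : IsMoorePenrose a b) : IsMoorePenrose (f a) (f b) where
  mul_inv_mul_self := by rw [← map_mul, ← map_mul, h.mul_inv_mul_self]
  inv_mul_mul_inv := by rw [← map_mul, ← map_mul, h.inv_mul_mul_inv]
  star_mul_inv := by rw [← map_mul, ← map_star, h.star_mul_inv]
  star_inv_mul := by rw [← map_mul, ← map_star, h.star_inv_mul]

theorem isSelfAdjoint {a b : R} (h : IsMoorePenrose a b) (ha : IsSelfAdjoint a) :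
    IsSelfAdjoint b :=
  (ha.star_eq ▸ h.star).unique h

theorem commute {a b : R} (h : IsMoorePenrose a b) (ha : IsSelfAdjoint a) : Commute a b := by
  rw [Commute, SemiconjBy, ← h.star_mul_inv, star_mul, ha.star_eq, (h.isSelfAdjoint ha).star_eq]

theorem mul_self {a b : R} (h : IsMoorePenrose a b) (ha : IsSelfAdjoint a) :
    IsMoorePenrose (a * a) (b * b) := by
  have hcomm := h.commute ha
  have h_idem : a * b * (a * b) = a * b := by rw [← mul_assoc, h.mul_inv_mul_self]
  have hab : a * a * (b * b) = a * b := by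
    rw [hcomm.mul_mul_mul_comm, h_idem]
  have hba : b * b * (a * a) = b * a := by
    rw [hcomm.symm.mul_mul_mul_comm, ← hcomm.eq, h_idem]
  constructor
  · rw [hab, ← mul_assoc, h.mul_inv_mul_self]
  · rw [hba, ← mul_assoc, h.inv_mul_mul_inv]
  · rw [hab, h.star_mul_inv]
  · rw [hba, h.star_inv_mul]

end IsMoorePenrose

variable {ι : Type*} [Fintype ι] {A B r : Matrix ι ι ℂ}

theorem mpinv_eq (h : IsMoorePenrose A B) : mpinv A = B := by
  have hex : ∃ B : Matrix ι ι ℂ,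
      A * B * A = A ∧ B * A * B = B ∧ (A * B)ᴴ = A * B ∧ (B * A)ᴴ = B * A := ⟨B, h.1, h.2, h.3, h.4⟩
  rw [mpinv, dif_pos hex]
  obtain ⟨h1, h2, h3, h4⟩ := hex.choose_spec
  exact IsMoorePenrose.unique ⟨h1, h2, h3, h4⟩ h

theorem exists_isMoorePenrose (hA : A.IsHermitian) : ∃ B, IsMoorePenrose A B := by
  classical
  have hcont (f : ℝ → ℝ) : ContinuousOn f (spectrum ℝ A) := A.finite_real_spectrum.continuousOn f
  have hmul (f g : ℝ → ℝ) : cfc f A * cfc g A = cfc (fun x => f x * g x) A :=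
    (cfc_mul f g A (hcont f) (hcont g)).symm
  have hself (f : ℝ → ℝ) : star (cfc f A) = cfc f A := (cfc_predicate f A).star_eq
  refine ⟨cfc (·⁻¹ : ℝ → ℝ) A, ?_⟩
  nth_rw 1 [← cfc_id' ℝ A hA.isSelfAdjoint]
  constructor
  · simp [hmul]
  · have hinv (x : ℝ) : x⁻¹ * x * x⁻¹ = x⁻¹ := by simpa using mul_inv_mul_cancel x⁻¹
    simp only [hmul, hinv]
  · rw [hmul, hself]
  · rw [hmul, hself]

theorem isMoorePenrose_mpinv (hA : A.IsHermitian) : IsMoorePenrose A (mpinv A) := by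
  obtain ⟨B, hB⟩ := exists_isMoorePenrose hA
  rwa [mpinv_eq hB]

theorem conjTranspose_mpinv (hA : A.IsHermitian) : (mpinv A)ᴴ = mpinv A :=
  (isMoorePenrose_mpinv hA).isSelfAdjoint hA.isSelfAdjoint

theorem posSemidef_msqrt (hr : r.PosSemidef) : (msqrt r).PosSemidef ∧ msqrt r * msqrt r = r := by
  classical
  open scoped MatrixOrder in
  have hex : ∃ B : Matrix ι ι ℂ, B.PosSemidef ∧ B * B = r :=
    ⟨CFC.sqrt r, nonneg_iff_posSemidef.mp (CFC.sqrt_nonneg r),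
      CFC.sqrt_mul_sqrt_self r (nonneg_iff_posSemidef.mpr hr)⟩
  rw [msqrt, dif_pos hex]
  exact hex.choose_spec

/-- The orthogonal projection onto the support of a Hermitian matrix. -/
noncomputable def supportProj (r : Matrix ι ι ℂ) : Matrix ι ι ℂ := r * mpinv r

theorem isHermitian_supportProj (hr : r.IsHermitian) : (supportProj r).IsHermitian :=
  (isMoorePenrose_mpinv hr).star_mul_inv

theorem mpinv_mul (hr : r.IsHermitian) : mpinv r * r = supportProj r :=
  ((isMoorePenrose_mpinv hr).commute hr.isSelfAdjoint).symm

theorem supportProj_mul (hr : r.IsHermitian) : supportProj r * r = r :=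
  (isMoorePenrose_mpinv hr).mul_inv_mul_self

theorem isIdempotentElem_supportProj (hr : r.IsHermitian) : IsIdempotentElem (supportProj r) := by
  rw [IsIdempotentElem]
  nth_rw 2 [supportProj]
  rw [← mul_assoc, supportProj_mul hr, supportProj]

theorem mem_msupp_iff (hr : r.IsHermitian) {v : ι → ℂ} :
    v ∈ msupp r ↔ supportProj r *ᵥ v = v := by
  rw [msupp, hr.eq]
  constructor
  · rintro ⟨w, rfl⟩
    rw [mulVecLin_apply, mulVec_mulVec, supportProj_mul hr]
  · intro hv
    exact ⟨mpinv r *ᵥ v, by rwa [mulVecLin_apply, mulVec_mulVec]⟩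

theorem supportProj_map {κ F : Type*} [Fintype κ] [FunLike F (Matrix ι ι ℂ) (Matrix κ κ ℂ)]
    [MulHomClass F (Matrix ι ι ℂ) (Matrix κ κ ℂ)] [StarHomClass F (Matrix ι ι ℂ) (Matrix κ κ ℂ)]
    (f : F) (hr : r.IsHermitian) : supportProj (f r) = f (supportProj r) := by
  rw [supportProj, mpinv_eq ((isMoorePenrose_mpinv hr).map f), ← map_mul, supportProj]

theorem mpinv_eq_mpinv_msqrt_mul_self (hr : r.PosSemidef) :
    mpinv r = mpinv (msqrt r) * mpinv (msqrt r) := by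
  obtain ⟨hs, hss⟩ := posSemidef_msqrt hr
  refine mpinv_eq ?_
  nth_rw 1 [← hss]
  exact (isMoorePenrose_mpinv hs.1).mul_self hs.1.isSelfAdjoint

theorem supportProj_eq_msqrt_mul (hr : r.PosSemidef) :
    supportProj r = msqrt r * mpinv (msqrt r) := by
  obtain ⟨hs, hss⟩ := posSemidef_msqrt hr
  calc supportProj r = msqrt r * msqrt r * (mpinv (msqrt r) * mpinv (msqrt r)) := by
        rw [supportProj, mpinv_eq_mpinv_msqrt_mul_self hr, hss]
    _ = msqrt r * mpinv (msqrt r) * (msqrt r * mpinv (msqrt r)) :=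
        ((isMoorePenrose_mpinv hs.1).commute hs.1.isSelfAdjoint).mul_mul_mul_comm _ _
    _ = msqrt r * mpinv (msqrt r) := isIdempotentElem_supportProj hs.1

end MoorePenrose

section Bicommutant

section Operator

variable {E : Type*} [NormedAddCommGroup E] [InnerProductSpace ℂ E] [FiniteDimensional ℂ E]

theorem isSemisimpleModule_of_star_mem {A : Subalgebra ℂ (E →L[ℂ] E)}
    (hA : ∀ T ∈ A, star T ∈ A) : IsSemisimpleModule A E := by
  have : IsScalarTower ℂ A E := ⟨fun _ _ _ => rfl⟩
  rw [isSemisimpleModule_iff]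
  refine ⟨fun p => ?_⟩
  let p' : Submodule ℂ E := p.restrictScalars ℂ
  let q : Submodule A E :=
    { p'ᗮ with
      smul_mem' := fun T v hv w hw => by
        change inner ℂ w (T.1 v) = 0
        rw [← ContinuousLinearMap.adjoint_inner_left]
        exact hv _ (p.smul_mem ⟨star T.1, hA _ T.2⟩ hw) }
  have h := p'.isCompl_orthogonal
  rw [isCompl_iff, Submodule.disjoint_def, Submodule.codisjoint_iff_exists_add_eq] at h
  exact ⟨q, Submodule.disjoint_def.mpr h.1, Submodule.codisjoint_iff_exists_add_eq.mpr h.2⟩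

theorem mem_adjoin_of_mem_centralizer_centralizer {S : Set (E →L[ℂ] E)}
    (hS : ∀ T ∈ S, star T ∈ S) {T : E →L[ℂ] E} (hT : T ∈ S.centralizer.centralizer) :
    T ∈ Algebra.adjoin ℂ S := by
  classical
  let A := Algebra.adjoin ℂ S
  have : IsScalarTower ℂ A E := ⟨fun _ _ _ => rfl⟩
  have : IsSemisimpleModule A E := isSemisimpleModule_of_star_mem fun a ha => by
    rw [← Subalgebra.mem_star_iff, Subalgebra.star_adjoin_comm]
    exact Algebra.adjoin_mono (fun b hb => by simpa using hS _ hb) ha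
  let f : Module.End (Module.End A E) E :=
    { T.toLinearMap with
      map_smul' := fun g v => by
        let g' : E →L[ℂ] E := (g.restrictScalars ℂ).toContinuousLinearMap
        have hg : g' ∈ S.centralizer := fun a ha =>
          ContinuousLinearMap.ext fun w => (g.map_smul ⟨a, Algebra.subset_adjoin ha⟩ w).symm
        exact (congr($(hT g' hg) v)).symm }
  let b := Module.finBasis ℂ E
  obtain ⟨a, ha⟩ := jacobson_density f (Finset.univ.image b)
  have hTa : T = a.1 := ContinuousLinearMap.coe_injective <| b.ext fun i =>
    ha (b i) (Finset.mem_image_of_mem b (Finset.mem_univ i))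
  exact hTa ▸ a.2

end Operator

variable {ι κ : Type*} [Fintype ι]

theorem mem_adjoin_of_mem_centralizer_centralizer_matrix [DecidableEq ι] {S : Set (Matrix ι ι ℂ)}
    (hS : ∀ X ∈ S, Xᴴ ∈ S) {Y : Matrix ι ι ℂ} (hY : Y ∈ S.centralizer.centralizer) :
    Y ∈ Algebra.adjoin ℂ S := by
  let φ := toEuclideanCLM (n := ι) (𝕜 := ℂ)
  have hφY : φ Y ∈ Algebra.adjoin ℂ (φ '' S) := by
    refine mem_adjoin_of_mem_centralizer_centralizer ?_ fun T hT => ?_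
    · rintro _ ⟨X, hX, rfl⟩
      exact ⟨Xᴴ, hS X hX, map_star φ X⟩
    · have hT' : φ.symm T ∈ S.centralizer := fun X hX => by
        rw [← φ.symm_apply_apply X, ← map_mul, ← map_mul, hT _ ⟨X, hX, rfl⟩]
      rw [← φ.apply_symm_apply T, ← map_mul, ← map_mul, hY _ hT']
  rw [show (φ : _ → _) = (φ : Matrix ι ι ℂ →ₐ[ℂ] _) from rfl, Algebra.adjoin_image] at hφY
  obtain ⟨Z, hZ, hZY⟩ := hφY
  exact φ.injective hZY ▸ hZ

theorem mul_mem_of_mem_centralizer_centralizer {S : Set (Matrix ι ι ℂ)} (hS : ∀ X ∈ S, Xᴴ ∈ S)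
    {W : Submodule ℂ (Matrix ι κ ℂ)} (hW : ∀ X ∈ S, ∀ Z ∈ W, X * Z ∈ W) {Y : Matrix ι ι ℂ}
    (hY : Y ∈ S.centralizer.centralizer) {Z : Matrix ι κ ℂ} (hZ : Z ∈ W) : Y * Z ∈ W := by
  classical
  have hY' := mem_adjoin_of_mem_centralizer_centralizer_matrix hS hY
  clear hY
  induction hY' using Algebra.adjoin_induction generalizing Z with
  | mem X hX => exact hW X hX Z hZ
  | algebraMap c => simpa [Algebra.algebraMap_eq_smul_one] using W.smul_mem c hZ
  | add A B _ _ hA hB => rw [Matrix.add_mul]; exact W.add_mem (hA hZ) (hB hZ)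
  | mul A B _ _ hA hB => rw [Matrix.mul_assoc]; exact hA (hB hZ)

end Bicommutant

section ModularMap

theorem exists_hasEigenvector_span_eq_of_isSymmetric {E : Type*} [NormedAddCommGroup E]
    [InnerProductSpace ℂ E] [FiniteDimensional ℂ E] {T : Module.End ℂ E} (hT : T.IsSymmetric)
    {V : Submodule ℂ E} (hV : ∀ v ∈ V, T v ∈ V) :
    ∃ (m : ℕ) (lam : Fin m → ℝ) (v : Fin m → E),
      (∀ k, T.HasEigenvector (lam k : ℂ) (v k)) ∧ Submodule.span ℂ (Set.range v) = V := by
  have hTV := hT.restrict_invariant hV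
  let b := hTV.eigenvectorBasis rfl
  refine ⟨Module.finrank ℂ V, hTV.eigenvalues rfl, fun k => b k, fun k => ⟨?_, ?_⟩, ?_⟩
  · exact Module.End.mem_eigenspace_iff.mpr
      (congrArg Subtype.val (hTV.apply_eigenvectorBasis rfl k))
  · simpa using b.orthonormal.ne_zero k
  · have hb : Submodule.span ℂ (Set.range b) = ⊤ := by simpa using b.toBasis.span_eq
    rw [← Function.comp_def Subtype.val b, Set.range_comp, ← V.coe_subtype, Submodule.span_image,
      hb, Submodule.map_subtype_top]

variable {ι : Type*} [Fintype ι] {r X Y K : Matrix ι ι ℂ} {F : Submodule ℂ (Matrix ι ι ℂ)}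

/-- The modular map `X ↦ r X r⁻` of a positive semidefinite matrix `r`, the square of the map
`X ↦ r^{1/2} X r⁻^{1/2}`. -/
noncomputable def modularMap (r : Matrix ι ι ℂ) : Module.End ℂ (Matrix ι ι ℂ) :=
  LinearMap.mulRight ℂ (mpinv r) ∘ₗ LinearMap.mulLeft ℂ r

theorem modularMap_apply (r X : Matrix ι ι ℂ) : modularMap r X = r * X * mpinv r := rfl

theorem exists_hasEigenvector_modularMap_span_eq (hr : r.IsHermitian)
    (hF : ∀ X ∈ F, modularMap r X ∈ F) :
    ∃ (m : ℕ) (lam : Fin m → ℝ) (K : Fin m → Matrix ι ι ℂ),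
      (∀ k, (modularMap r).HasEigenvector (lam k : ℂ) (K k)) ∧
        Submodule.span ℂ (Set.range K) = F := by
  classical
  let := toMatrixNormedAddCommGroup (1 : Matrix ι ι ℂ) .one
  let := toMatrixInnerProductSpace (1 : Matrix ι ι ℂ) .one
  refine exists_hasEigenvector_span_eq_of_isSymmetric (fun X Y => ?_) hF
  change (Y * 1 * (r * X * mpinv r)ᴴ).trace = (r * Y * mpinv r * 1 * Xᴴ).trace
  rw [conjTranspose_mul, conjTranspose_mul, conjTranspose_mpinv hr, hr.eq, mul_one, mul_one,
    ← mul_assoc, ← mul_assoc, trace_mul_comm]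
  simp only [mul_assoc]

/-- The operators supported on both sides in the range of `P`; for a projection `P` this is the
corner algebra `P B(H) P`. -/
def corner (P : Matrix ι ι ℂ) : Submodule ℂ (Matrix ι ι ℂ) where
  carrier := {X | P * X = X ∧ X * P = X}
  add_mem' hX hY := ⟨by rw [mul_add, hX.1, hY.1], by rw [add_mul, hX.2, hY.2]⟩
  zero_mem' := ⟨mul_zero P, zero_mul P⟩
  smul_mem' c X hX := ⟨by rw [mul_smul_comm, hX.1], by rw [smul_mul_assoc, hX.2]⟩

theorem mpinv_mul_supportProj (hr : r.IsHermitian) : mpinv r * supportProj r = mpinv r := by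
  rw [supportProj, ← mul_assoc, (isMoorePenrose_mpinv hr).inv_mul_mul_inv]

theorem mul_eq_smul_mul_of_modularMap_eq_smul (hr : r.IsHermitian)
    (hK : K ∈ corner (supportProj r)) {c : ℂ} (h : modularMap r K = c • K) :
    r * K = c • (K * r) := by
  rw [← smul_mul_assoc, ← h, modularMap_apply, mul_assoc, mpinv_mul hr, mul_assoc, hK.2]

theorem modularMap_injOn_corner (hr : r.IsHermitian) (hK : K ∈ corner (supportProj r))
    (h : modularMap r K = 0) : K = 0 := by
  rw [← hK.1, ← mpinv_mul hr, mul_assoc,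
    mul_eq_smul_mul_of_modularMap_eq_smul hr hK (h.trans (zero_smul ℂ K).symm), zero_smul,
    mul_zero]

theorem pos_of_hasEigenvector_modularMap (hr : r.PosSemidef) (hK : K ∈ corner (supportProj r))
    {c : ℝ} (h : (modularMap r).HasEigenvector (c : ℂ) K) : 0 < c := by
  obtain ⟨hs, hss⟩ := posSemidef_msqrt hr
  set s := msqrt r
  set t := mpinv s
  have ht : tᴴ = t := conjTranspose_mpinv hs.1
  have hc : c • (Kᴴ * K).trace = ((s * K * t)ᴴ * (s * K * t)).trace := calc
    c • (Kᴴ * K).trace = (Kᴴ * (r * K * mpinv r)).trace := by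
      rw [← modularMap_apply, h.apply_eq_smul, mul_smul_comm, trace_smul, Complex.coe_smul]
    _ = ((Kᴴ * s * s * K * t) * t).trace := by
      rw [mpinv_eq_mpinv_msqrt_mul_self hr]
      nth_rw 1 [← hss]
      simp only [mul_assoc, s, t]
    _ = ((s * K * t)ᴴ * (s * K * t)).trace := by
      rw [trace_mul_comm, conjTranspose_mul, conjTranspose_mul, ht, hs.1.eq]
      simp only [mul_assoc]
  have hKK : 0 < (Kᴴ * K).trace :=
    (posSemidef_conjTranspose_mul_self K).trace_nonneg.lt_of_ne'
      (trace_conjTranspose_mul_self_eq_zero_iff.not.mpr h.2)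
  have hc_ne : c ≠ 0 := by
    rintro rfl
    exact h.2 (modularMap_injOn_corner hr.1 hK (by simpa using h.apply_eq_smul))
  have hc_pos : 0 < c • (Kᴴ * K).trace :=
    (hc ▸ (posSemidef_conjTranspose_mul_self _).trace_nonneg).lt_of_ne'
      (smul_ne_zero hc_ne hKK.ne')
  exact (smul_pos_iff_of_pos_right hKK).mp hc_pos

end ModularMap

section DistortedAlgebra

variable {ι : Type*} [Fintype ι] {r X Y K : Matrix ι ι ℂ} {F : Submodule ℂ (Matrix ι ι ℂ)}

/-- `F` is a modular-invariant distorted algebra for `r`: a subspace closed under the adjoint, the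
`r`-modified product and the modular map. -/
structure IsDistortedAlgebra (r : Matrix ι ι ℂ) (F : Submodule ℂ (Matrix ι ι ℂ)) : Prop where
  conjTranspose_mem : ∀ X ∈ F, Xᴴ ∈ F
  mul_mem : ∀ X ∈ F, ∀ Y ∈ F, X * mpinv r * Y ∈ F
  modular_mem : ∀ X ∈ F, msqrt r * X * mpinv (msqrt r) ∈ F

theorem isDistortedAlgebra_Fdist (r : Matrix ι ι ℂ) (W : Set (Matrix ι ι ℂ)) :
    IsDistortedAlgebra r (Fdist r W) := by
  constructor <;> simp only [Fdist, Submodule.mem_sInf, Set.mem_ofPred_eq]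
  · exact fun X hX S hS => hS.2.1 X (hX S hS)
  · exact fun X hX Y hY S hS => hS.2.2.1 X (hX S hS) Y (hY S hS)
  · exact fun X hX S hS => hS.2.2.2 X (hX S hS)

theorem subset_Fdist (r : Matrix ι ι ℂ) (W : Set (Matrix ι ι ℂ)) : W ⊆ Fdist r W :=
  fun _ hX => Submodule.mem_sInf.mpr fun _ hS => hS.1 hX

theorem Fdist_le {W : Set (Matrix ι ι ℂ)} (hF : IsDistortedAlgebra r F) (hW : W ⊆ F) :
    Fdist r W ≤ F :=
  sInf_le ⟨hW, hF.conjTranspose_mem, hF.mul_mem, hF.modular_mem⟩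

theorem isDistortedAlgebra_corner (hr : r.PosSemidef) :
    IsDistortedAlgebra r (corner (supportProj r)) := by
  have hP := isHermitian_supportProj hr.1
  refine ⟨fun X hX => ⟨?_, ?_⟩, fun X hX Y hY => ⟨?_, ?_⟩, fun X _ => ⟨?_, ?_⟩⟩
  · rw [← hP.eq, ← conjTranspose_mul, hX.2]
  · rw [← hP.eq, ← conjTranspose_mul, hX.1]
  · rw [← mul_assoc, ← mul_assoc, hX.1]
  · rw [mul_assoc, hY.2]
  · rw [supportProj_eq_msqrt_mul hr, ← supportProj, ← mul_assoc, ← mul_assoc,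
      supportProj_mul (posSemidef_msqrt hr).1.1]
  · rw [supportProj_eq_msqrt_mul hr, mul_assoc, ← supportProj,
      mpinv_mul_supportProj (posSemidef_msqrt hr).1.1]

section SupportCommutant

variable [DecidableEq ι]

/-- The commutant of the genuine algebra `F r⁻`, cut down to the support of `r`. Its modular
eigenoperators supply the noise operators. -/
noncomputable def supportCommutant (r : Matrix ι ι ℂ) (F : Submodule ℂ (Matrix ι ι ℂ)) :
    Submodule ℂ (Matrix ι ι ℂ) :=
  corner (supportProj r) ⊓
    Subalgebra.toSubmodule (Subalgebra.centralizer ℂ ((· * mpinv r) '' F))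

theorem mem_supportCommutant : K ∈ supportCommutant r F ↔
    K ∈ corner (supportProj r) ∧ ∀ X ∈ F, X * mpinv r * K = K * (X * mpinv r) := by
  simp [supportCommutant, Subalgebra.mem_centralizer_iff]

theorem mul_eq_smul_mul (hr : r.IsHermitian) (hFP : F ≤ corner (supportProj r))
    (hK : K ∈ supportCommutant r F) {c : ℂ} (h : modularMap r K = c • K) (hX : X ∈ F) :
    X * K = c • (K * X) := by
  rw [mem_supportCommutant] at hK
  have hXp : X * mpinv r * r = X := by rw [mul_assoc, mpinv_mul hr, (hFP hX).2]
  calc X * K = X * mpinv r * (r * K) := by rw [← mul_assoc, hXp]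
    _ = c • (X * mpinv r * K * r) := by
        rw [mul_eq_smul_mul_of_modularMap_eq_smul hr hK.1 h, mul_smul_comm, mul_assoc _ K r]
    _ = c • (K * X) := by rw [hK.2 X hX, mul_assoc K, hXp]

end SupportCommutant

namespace IsDistortedAlgebra

theorem modularMap_mem (hF : IsDistortedAlgebra r F) (hr : r.PosSemidef) (hX : X ∈ F) :
    modularMap r X ∈ F := by
  have h := hF.modular_mem _ (hF.modular_mem X hX)
  rw [modularMap_apply, mpinv_eq_mpinv_msqrt_mul_self hr]
  simpa only [← mul_assoc, (posSemidef_msqrt hr).2] using h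

theorem mpinv_mul_mul_mem (hF : IsDistortedAlgebra r F) (hr : r.PosSemidef) (hX : X ∈ F) :
    mpinv r * X * r ∈ F := by
  have h := hF.conjTranspose_mem _ (hF.modularMap_mem hr (hF.conjTranspose_mem X hX))
  rwa [modularMap_apply, conjTranspose_mul, conjTranspose_mul, conjTranspose_conjTranspose,
    hr.1.eq, conjTranspose_mpinv hr.1, ← mul_assoc] at h

theorem modularMap_mem_supportCommutant [DecidableEq ι] (hF : IsDistortedAlgebra r F)
    (hr : r.PosSemidef) (hFP : F ≤ corner (supportProj r)) (hK : K ∈ supportCommutant r F) :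
    modularMap r K ∈ supportCommutant r F := by
  rw [mem_supportCommutant] at hK ⊢
  refine ⟨⟨?_, ?_⟩, fun X hX => ?_⟩
  · rw [modularMap_apply, ← mul_assoc, ← mul_assoc, supportProj_mul hr.1]
  · rw [modularMap_apply, mul_assoc, mpinv_mul_supportProj hr.1]
  have hXr : X * mpinv r * r = r * (mpinv r * X) := by
    rw [mul_assoc, mpinv_mul hr.1, (hFP hX).2, ← mul_assoc, ← supportProj, (hFP hX).1]
  have hpX : mpinv r * X = mpinv r * X * r * mpinv r := by
    rw [mul_assoc, ← supportProj, mul_assoc, (hFP hX).2]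
  have hcomm : mpinv r * X * K = K * (mpinv r * X) := by
    rw [hpX]
    exact hK.2 _ (hF.mpinv_mul_mul_mem hr hX)
  calc X * mpinv r * modularMap r K = r * (mpinv r * X * K) * mpinv r := by
        rw [modularMap_apply, ← mul_assoc, ← mul_assoc, hXr]
        simp only [mul_assoc]
    _ = modularMap r K * (X * mpinv r) := by
        rw [hcomm, modularMap_apply]
        simp only [mul_assoc]

theorem mul_mem_of_commute_supportCommutant [DecidableEq ι] (hF : IsDistortedAlgebra r F)
    (hr : r.PosSemidef) (hrF : r ∈ F) (hFP : F ≤ corner (supportProj r))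
    (hY : Y ∈ corner (supportProj r))
    (hYK : ∀ K ∈ supportCommutant r F, Commute K Y) (hX : X ∈ F) : Y * X ∈ F := by
  set P := supportProj r
  refine mul_mem_of_mem_centralizer_centralizer (S := (· * mpinv r) '' F) ?_ ?_ ?_ hX
  · rintro _ ⟨Z, hZ, rfl⟩
    have hZ' := hF.conjTranspose_mem Z hZ
    refine ⟨mpinv r * Zᴴ * r, hF.mpinv_mul_mul_mem hr hZ', ?_⟩
    change mpinv r * Zᴴ * r * mpinv r = (Z * mpinv r)ᴴ
    rw [conjTranspose_mul, conjTranspose_mpinv hr.1, mul_assoc, ← supportProj, mul_assoc,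
      (hFP hZ').2]
  · rintro _ ⟨Z, hZ, rfl⟩ X hX
    exact hF.mul_mem Z hZ X hX
  · intro K hK
    have hKP : P * K = K * P := hK P ⟨r, hrF, rfl⟩
    have hPP : P * P = P := isIdempotentElem_supportProj hr.1
    have hKPC : K * P ∈ supportCommutant r F := by
      refine mem_supportCommutant.mpr ⟨⟨?_, ?_⟩, fun Z hZ => ?_⟩
      · rw [← mul_assoc, hKP, mul_assoc, hPP]
      · rw [mul_assoc, hPP]
      · rw [← mul_assoc, hK _ ⟨Z, hZ, rfl⟩, mul_assoc, mul_assoc, mul_assoc K P, ← mul_assoc P,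
          (hFP hZ).1, mpinv_mul_supportProj hr.1]
    calc K * Y = K * P * Y := by rw [mul_assoc, hY.1]
      _ = Y * (K * P) := hYK _ hKPC
      _ = Y * K := by rw [← hKP, ← mul_assoc, hY.2]

theorem exists_modular_eigenoperators (hF : IsDistortedAlgebra r F) (hr : r.PosSemidef)
    (hrF : r ∈ F) (hFP : F ≤ corner (supportProj r)) :
    ∃ (m : ℕ) (lam : Fin m → ℝ) (K : Fin m → Matrix ι ι ℂ), (∀ k, 0 < lam k) ∧
      (∀ k, ∀ X ∈ F, X * K k = (lam k : ℂ) • (K k * X)) ∧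
      ∀ Y ∈ corner (supportProj r), (∀ k, Commute (K k) Y) → ∀ X ∈ F, Y * X ∈ F := by
  classical
  obtain ⟨m, lam, K, hK, hspan⟩ := exists_hasEigenvector_modularMap_span_eq hr.1
    fun _ => hF.modularMap_mem_supportCommutant hr hFP
  have hKC (k : Fin m) : K k ∈ supportCommutant r F :=
    hspan ▸ Submodule.subset_span (Set.mem_range_self k)
  refine ⟨m, lam, K, fun k => pos_of_hasEigenvector_modularMap hr (hKC k).1 (hK k),
    fun k X hX => mul_eq_smul_mul hr.1 hFP (hKC k) (hK k).apply_eq_smul hX,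
    fun Y hY hYK X hX => hF.mul_mem_of_commute_supportCommutant hr hrF hFP hY (fun Z hZ => ?_) hX⟩
  rw [← hspan] at hZ
  induction hZ using Submodule.span_induction with
  | mem Z hZ => obtain ⟨k, rfl⟩ := hZ; exact hYK k
  | zero => exact Commute.zero_left Y
  | add Z W _ _ hZ hW => exact hZ.add_left hW
  | smul c Z _ hZ => exact hZ.smul_left c

end IsDistortedAlgebra

end DistortedAlgebra

section SupportProjection

variable {ι : Type*} [Fintype ι] {r X : Matrix ι ι ℂ}

theorem supportProj_mul_eq_iff (hr : r.IsHermitian) :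
    supportProj r * X = X ↔ ∀ w, X *ᵥ w ∈ msupp r := by
  classical
  simp only [mem_msupp_iff hr, mulVec_mulVec, ext_iff_mulVec]

theorem supportProj_mul_eq_of_msupp_le {s : Matrix ι ι ℂ} (hr : r.IsHermitian)
    (hs : s.IsHermitian) (h : msupp s ≤ msupp r) : supportProj r * s = s :=
  (supportProj_mul_eq_iff hr).mpr fun w => h ((supportProj_mul_eq_iff hs).mp (supportProj_mul hs) w)

theorem supportProj_mul_mul_supportProj (h : supportProj r * (X * r) = X * r) :
    supportProj r * X * supportProj r = X * supportProj r := by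
  nth_rw 2 3 [supportProj]
  rw [← mul_assoc, ← mul_assoc, mul_assoc (supportProj r), h]

theorem commute_supportProj (hr : r.IsHermitian) (h : supportProj r * (X * r) = X * r)
    (h' : supportProj r * (Xᴴ * r) = Xᴴ * r) : Commute (supportProj r) X := by
  have hQ := isHermitian_supportProj hr
  calc supportProj r * X = (supportProj r * Xᴴ * supportProj r)ᴴ := by
        rw [supportProj_mul_mul_supportProj h', conjTranspose_mul, conjTranspose_conjTranspose,
          hQ.eq]
    _ = supportProj r * X * supportProj r := by
        simp only [conjTranspose_mul, conjTranspose_conjTranspose, hQ.eq, mul_assoc]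
    _ = X * supportProj r := supportProj_mul_mul_supportProj h

theorem commute_supportProj_of_mul_eq_smul_mul (hr : r.IsHermitian) {c : ℝ} (hc : c ≠ 0)
    (h : r * X = (c : ℂ) • (X * r)) : Commute (supportProj r) X := by
  refine commute_supportProj hr ?_ ?_
  · rw [← inv_smul_smul₀ (Complex.ofReal_ne_zero.mpr hc) (X * r), ← h, mul_smul_comm, ← mul_assoc,
      supportProj_mul hr]
  · rw [conjTranspose_mul_eq_smul_mul hr h, mul_smul_comm, ← mul_assoc, supportProj_mul hr]

theorem mul_supportProj_mem_corner {P : Matrix ι ι ℂ} (hr : r.IsHermitian) (h : r ∈ corner P)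
    (hX : Commute (supportProj r) X) : X * supportProj r ∈ corner P := by
  constructor
  · rw [← hX.eq, supportProj, ← mul_assoc, ← mul_assoc, h.1]
  · rw [← mpinv_mul hr, mul_assoc, mul_assoc, h.2]

end SupportProjection

section Neighborhood

open scoped Kronecker

variable {n : ℕ} {d : Fin n → Type*} {N : Finset (Fin n)}
  {X Y : Matrix (∀ a, d a) (∀ a, d a) ℂ} {A : Matrix (nbhdIdx d N) (nbhdIdx d N) ℂ}
  {k l : nbhdCoIdx d N}

theorem eq_restrict_union_iff {S T : Finset (Fin n)} {p : nbhdIdx d (S ∪ T)}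
    {x : ∀ a, d a} :
    p = (S ∪ T).restrict x ↔ Finset.restrict₂ Finset.subset_union_left p = S.restrict x ∧
      Finset.restrict₂ Finset.subset_union_right p = T.restrict x := by
  refine ⟨?_, fun ⟨hS, hT⟩ => funext fun ⟨a, ha⟩ => ?_⟩
  · rintro rfl
    exact ⟨rfl, rfl⟩
  · obtain haS | haT := Finset.mem_union.mp ha
    exacts [congrFun hS ⟨a, haS⟩, congrFun hT ⟨a, haT⟩]

theorem splitLift_eq_submatrix_kronecker (A : Matrix (nbhdIdx d N) (nbhdIdx d N) ℂ)
    (B : Matrix (nbhdCoIdx d N) (nbhdCoIdx d N) ℂ) :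
    splitLift d N A B = (A ⊗ₖ B).submatrix (splitEquiv d N) (splitEquiv d N) := rfl

theorem nbhdLift_apply [∀ a, DecidableEq (d a)]
    (A : Matrix (nbhdIdx d N) (nbhdIdx d N) ℂ) (x y : ∀ a, d a) :
    nbhdLift d N A x y = if ∀ a ∉ N, x a = y a then A (N.restrict x) (N.restrict y) else 0 := by
  have h : (splitEquiv d N x).2 = (splitEquiv d N y).2 ↔ ∀ a ∉ N, x a = y a := by
    simp [splitEquiv, funext_iff, Equiv.piEquivPiSubtypeProd]
  rw [nbhdLift, splitLift_eq_submatrix_kronecker, submatrix_apply, kronecker_apply, one_apply,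
    mul_ite, mul_one, mul_zero]
  exact if_congr h rfl rfl

/-- The block `⟨k| X |l⟩ ∈ B(H_N)` of an operator `X` on `H = H_N ⊗ H_N̄` at a pair of basis
vectors of `H_N̄`. -/
def nbhdBlock (X : Matrix (∀ a, d a) (∀ a, d a) ℂ) (k l : nbhdCoIdx d N) :
    Matrix (nbhdIdx d N) (nbhdIdx d N) ℂ :=
  X.submatrix (fun i => (splitEquiv d N).symm (i, k)) fun j => (splitEquiv d N).symm (j, l)

theorem nbhdBlock_ext (h : ∀ k l : nbhdCoIdx d N, nbhdBlock X k l = nbhdBlock Y k l) : X = Y := by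
  ext x y
  simpa [nbhdBlock] using congr($(h (splitEquiv d N x).2 (splitEquiv d N y).2)
    (splitEquiv d N x).1 (splitEquiv d N y).1)

theorem nbhdBlock_splitLift (B : Matrix (nbhdCoIdx d N) (nbhdCoIdx d N) ℂ) :
    nbhdBlock (splitLift d N A B) k l = B k l • A := by
  ext i j
  simp [nbhdBlock, splitLift_eq_submatrix_kronecker, mul_comm]

variable [∀ a, Fintype (d a)]

theorem splitLift_mul_splitLift (A A' : Matrix (nbhdIdx d N) (nbhdIdx d N) ℂ)
    (B B' : Matrix (nbhdCoIdx d N) (nbhdCoIdx d N) ℂ) :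
    splitLift d N A B * splitLift d N A' B' = splitLift d N (A * A') (B * B') := by
  simp only [splitLift_eq_submatrix_kronecker, submatrix_mul_equiv, mul_kronecker_mul]

theorem nbhdBlock_mul :
    nbhdBlock (X * Y) k l = ∑ m, nbhdBlock X k m * nbhdBlock Y m l := by
  ext i j
  rw [Matrix.sum_apply]
  simp only [nbhdBlock, submatrix_apply, mul_apply]
  rw [← (splitEquiv d N).symm.sum_comp, Fintype.sum_prod_type, Finset.sum_comm]

theorem nbhdPtrace_eq_sum_nbhdBlock : nbhdPtrace d N X = ∑ k, nbhdBlock X k k := by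
  ext i j
  simp [nbhdPtrace, nbhdBlock, Matrix.sum_apply]

theorem trace_nbhdPtrace : (nbhdPtrace d N X).trace = X.trace := by
  simp only [trace, diag, nbhdPtrace, of_apply]
  rw [← (splitEquiv d N).symm.sum_comp, Fintype.sum_prod_type]

theorem posSemidef_nbhdPtrace (hX : X.PosSemidef) : (nbhdPtrace d N X).PosSemidef := by
  rw [nbhdPtrace_eq_sum_nbhdBlock]
  exact posSemidef_sum _ fun k _ => hX.submatrix _

variable [∀ a, DecidableEq (d a)]

theorem eq_sum_splitLift_nbhdBlock (N : Finset (Fin n)) (X : Matrix (∀ a, d a) (∀ a, d a) ℂ) :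
    X = ∑ k, ∑ l, splitLift d N (nbhdBlock X k l) (single k l 1) := by
  ext x y
  simp [Matrix.sum_apply, splitLift_eq_submatrix_kronecker, single_apply, nbhdBlock, ite_and]

theorem mem_extF_iff :
    Y ∈ extF d N X ↔ ∀ k l, nbhdBlock Y k l ∈ Fdist (nbhdPtrace d N X) (nbhdSchmidt d N X) := by
  refine ⟨fun hY k l => ?_, fun hY => ?_⟩
  · induction hY using Submodule.span_induction with
    | mem Y hY =>
      obtain ⟨A, hA, B, rfl⟩ := hY
      rw [nbhdBlock_splitLift]
      exact Submodule.smul_mem _ _ hA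
    | zero => exact zero_mem _
    | add Y Z _ _ hY hZ => exact add_mem hY hZ
    | smul c Y _ hY => exact Submodule.smul_mem _ c hY
  · rw [eq_sum_splitLift_nbhdBlock N Y]
    exact sum_mem fun k _ => sum_mem fun l _ => Submodule.subset_span ⟨_, hY k l, _, rfl⟩

variable (d N) in
/-- The embedding `A ↦ A ⊗ I` of the neighborhood algebra `B(H_N)` into `B(H)`, as a `⋆`-algebra
homomorphism. -/
noncomputable def nbhdLiftHom :
    Matrix (nbhdIdx d N) (nbhdIdx d N) ℂ →⋆ₐ[ℂ] Matrix (∀ a, d a) (∀ a, d a) ℂ where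
  toFun := nbhdLift d N
  map_one' := by
    rw [nbhdLift, splitLift_eq_submatrix_kronecker, one_kronecker_one, submatrix_one_equiv]
  map_mul' A B := by simp only [nbhdLift, splitLift_mul_splitLift, mul_one]
  map_zero' := by
    rw [nbhdLift, splitLift_eq_submatrix_kronecker, zero_kronecker, submatrix_zero]
    rfl
  map_add' A B := by
    simp only [nbhdLift, splitLift_eq_submatrix_kronecker, add_kronecker]
    rfl
  commutes' c := by
    rw [Algebra.algebraMap_eq_smul_one, Algebra.algebraMap_eq_smul_one, nbhdLift,
      splitLift_eq_submatrix_kronecker, smul_kronecker, one_kronecker_one, submatrix_smul,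
      Pi.smul_apply, Pi.smul_apply, submatrix_one_equiv]
  map_star' A := by
    simp only [star_eq_conjTranspose, nbhdLift, splitLift_eq_submatrix_kronecker,
      conjTranspose_submatrix, conjTranspose_kronecker, conjTranspose_one]

theorem nbhdLiftHom_apply (A : Matrix (nbhdIdx d N) (nbhdIdx d N) ℂ) :
    nbhdLiftHom d N A = nbhdLift d N A := rfl

theorem nbhdBlock_nbhdLift_mul : nbhdBlock (nbhdLift d N A * Y) k l = A * nbhdBlock Y k l := by
  simp [nbhdBlock_mul, nbhdLift, nbhdBlock_splitLift, one_apply]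

theorem nbhdBlock_mul_nbhdLift : nbhdBlock (Y * nbhdLift d N A) k l = nbhdBlock Y k l * A := by
  simp [nbhdBlock_mul, nbhdLift, nbhdBlock_splitLift, one_apply]

theorem nbhdPtrace_nbhdLift_mul : nbhdPtrace d N (nbhdLift d N A * X) = A * nbhdPtrace d N X := by
  simp only [nbhdPtrace_eq_sum_nbhdBlock, nbhdBlock_nbhdLift_mul, Finset.mul_sum]

theorem nbhdPtrace_mul_nbhdLift : nbhdPtrace d N (X * nbhdLift d N A) = nbhdPtrace d N X * A := by
  simp only [nbhdPtrace_eq_sum_nbhdBlock, nbhdBlock_mul_nbhdLift, Finset.sum_mul]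

theorem nbhdPtrace_mem_nbhdSchmidt : nbhdPtrace d N X ∈ nbhdSchmidt d N X :=
  ⟨1, by rw [coLift, ← nbhdLift, ← nbhdLiftHom_apply, map_one, one_mul]⟩

theorem nbhdSchmidt_subset_corner {P : Matrix (nbhdIdx d N) (nbhdIdx d N) ℂ}
    (h : X ∈ corner (nbhdLift d N P)) : nbhdSchmidt d N X ⊆ corner P := by
  rintro _ ⟨B, rfl⟩
  have hcomm : nbhdLift d N P * coLift d N B = coLift d N B * nbhdLift d N P := by
    simp only [nbhdLift, coLift, splitLift_mul_splitLift, mul_one, one_mul]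
  constructor
  · rw [← nbhdPtrace_nbhdLift_mul, ← mul_assoc, hcomm, mul_assoc, h.1]
  · rw [← nbhdPtrace_mul_nbhdLift, mul_assoc, h.2]

end Neighborhood

section LocalAlgebra

variable {n : ℕ} {d : Fin n → Type*} [∀ a, Fintype (d a)] [∀ a, DecidableEq (d a)]
  {N S T : Finset (Fin n)} {X Y ρ : Matrix (∀ a, d a) (∀ a, d a) ℂ}

variable (d N) in
/-- The algebra of the operators `A ⊗ I` on `H` that act on the sites of `N` only. -/
noncomputable def localAlgebra : Subalgebra ℂ (Matrix (∀ a, d a) (∀ a, d a) ℂ) :=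
  (nbhdLiftHom d N).toAlgHom.range

theorem localAlgebra_mono (h : N ⊆ S) : localAlgebra d N ≤ localAlgebra d S := by
  rintro _ ⟨A, rfl⟩
  refine ⟨of fun i j => if ∀ a : S, a.1 ∉ N → i a = j a then
    A (Finset.restrict₂ h i) (Finset.restrict₂ h j) else 0, ?_⟩
  ext x y
  change nbhdLift d S _ x y = nbhdLift d N A x y
  rw [nbhdLift_apply, nbhdLift_apply, of_apply, ← ite_and]
  refine if_congr ⟨fun hxy a ha => ?_, fun hxy => ⟨fun a ha => hxy a (mt (@h a) ha),
    fun a ha => hxy a ha⟩⟩ rfl rfl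
  by_cases haS : a ∈ S
  exacts [hxy.2 ⟨a, haS⟩ ha, hxy.1 a haS]

theorem nbhdLift_mul_nbhdLift_apply (h : Disjoint S T)
    (A : Matrix (nbhdIdx d S) (nbhdIdx d S) ℂ) (B : Matrix (nbhdIdx d T) (nbhdIdx d T) ℂ)
    (x y : ∀ a, d a) :
    (nbhdLift d S A * nbhdLift d T B) x y =
      if ∀ a ∉ S ∪ T, x a = y a then
        A (S.restrict x) (S.restrict y) * B (T.restrict x) (T.restrict y) else 0 := by
  have hT (a) (ha : a ∈ T) : a ∉ S := fun haS => Finset.disjoint_left.mp h haS ha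
  rw [mul_apply, Finset.sum_eq_single (S.piecewise y x)]
  · have hS : S.restrict (S.piecewise y x) = S.restrict y := by
      ext a; simp
    have hT : T.restrict (S.piecewise y x) = T.restrict x := by
      ext a; simp [hT a a.2]
    rw [nbhdLift_apply, nbhdLift_apply, hS, hT, if_pos (by simp +contextual), mul_ite, mul_zero]
    refine if_congr (forall_congr' fun a => ?_) rfl rfl
    by_cases haS : a ∈ S <;> simp [haS]
  · intro z _ hz
    rw [nbhdLift_apply, nbhdLift_apply, ite_mul, zero_mul, mul_ite, mul_zero, ← ite_and, if_neg]
    rintro ⟨hxz, hzy⟩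
    refine hz (funext fun a => ?_)
    by_cases haS : a ∈ S
    · rw [Finset.piecewise_eq_of_mem _ _ _ haS, hzy a fun haT => hT a haT haS]
    · rw [Finset.piecewise_eq_of_notMem _ _ _ haS, hxz a haS]
  · simp

theorem commute_of_mem_localAlgebra (h : Disjoint S T) (hX : X ∈ localAlgebra d S)
    (hY : Y ∈ localAlgebra d T) : Commute X Y := by
  obtain ⟨A, rfl⟩ := hX
  obtain ⟨B, rfl⟩ := hY
  ext x y
  change (nbhdLift d S A * nbhdLift d T B) x y = (nbhdLift d T B * nbhdLift d S A) x y
  rw [nbhdLift_mul_nbhdLift_apply h, nbhdLift_mul_nbhdLift_apply h.symm, Finset.union_comm,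
    mul_comm]

theorem nbhdLift_single_union (h : Disjoint S T) (p q : nbhdIdx d (S ∪ T)) :
    nbhdLift d (S ∪ T) (single p q 1) =
      nbhdLift d S (single (Finset.restrict₂ Finset.subset_union_left p)
        (Finset.restrict₂ Finset.subset_union_left q) 1) *
      nbhdLift d T (single (Finset.restrict₂ Finset.subset_union_right p)
        (Finset.restrict₂ Finset.subset_union_right q) 1) := by
  ext x y
  rw [nbhdLift_mul_nbhdLift_apply h, nbhdLift_apply]
  simp only [single_apply, eq_restrict_union_iff, mul_ite, mul_one, mul_zero, ← ite_and]
  exact if_congr (by tauto) rfl rfl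

theorem localAlgebra_union_le (h : Disjoint S T) :
    Subalgebra.toSubmodule (localAlgebra d (S ∪ T)) ≤
      Subalgebra.toSubmodule (localAlgebra d S) * Subalgebra.toSubmodule (localAlgebra d T) := by
  rintro _ ⟨A, rfl⟩
  change nbhdLiftHom d (S ∪ T) A ∈ _
  induction A using Matrix.induction_on' with
  | h_zero => rw [map_zero]; exact zero_mem _
  | h_add A B hA hB => rw [map_add]; exact add_mem hA hB
  | h_std_basis p q c =>
    have hc : single p q c = c • single p q (1 : ℂ) := by rw [smul_single, smul_eq_mul, mul_one]
    rw [hc, map_smul, nbhdLiftHom_apply, nbhdLift_single_union h]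
    exact Submodule.smul_mem _ c (Submodule.mul_mem_mul ⟨_, rfl⟩ ⟨_, rfl⟩)

theorem sum_single_mul_mul_single {ι R : Type*} [Fintype ι] [DecidableEq ι] [CommSemiring R]
    (A : Matrix ι ι R) : ∑ i, ∑ j, single i j 1 * A * single j i 1 = A.trace • 1 := by
  ext x y
  obtain rfl | hxy := eq_or_ne x y
  · simp [Matrix.sum_apply, single_apply, trace]
  · simp [Matrix.sum_apply, single_apply, hxy, ite_and]

theorem exists_nbhdLift_mul_mulVec_ne_zero {A : Matrix (nbhdIdx d S) (nbhdIdx d S) ℂ}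
    (hA : A.trace ≠ 0) {v : (∀ a, d a) → ℂ} (hv : v ≠ 0) :
    ∃ B, nbhdLift d S (A * B) *ᵥ v ≠ 0 := by
  by_contra! h
  have htr : A.trace • v = 0 := calc
    A.trace • v = nbhdLiftHom d S (∑ i, ∑ j, single i j 1 * A * single j i 1) *ᵥ v := by
      rw [sum_single_mul_mul_single, map_smul, map_one, smul_mulVec, one_mulVec]
    _ = 0 := by
      simp only [mul_assoc, map_sum, sum_mulVec]
      refine Finset.sum_eq_zero fun i _ => Finset.sum_eq_zero fun j _ => ?_
      rw [map_mul, ← mulVec_mulVec, nbhdLiftHom_apply (A * _), h, mulVec_zero]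
  exact (smul_ne_zero hA hv) htr

theorem mul_nbhdLift_nbhdPtrace_eq_zero (hX : X ∈ localAlgebra d S) (h : X * ρ = 0) :
    X * nbhdLift d S (nbhdPtrace d S ρ) = 0 := by
  obtain ⟨A, rfl⟩ := hX
  have hA : A * nbhdPtrace d S ρ = 0 := by
    rw [← nbhdPtrace_nbhdLift_mul]
    exact (congrArg (nbhdPtrace d S) h).trans (by ext i j; simp [nbhdPtrace])
  change nbhdLiftHom d S A * nbhdLiftHom d S _ = 0
  rw [← map_mul, hA, map_zero]

theorem localAlgebra_empty : localAlgebra d ∅ = ⊥ := by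
  refine eq_bot_iff.mpr ?_
  rintro _ ⟨A, rfl⟩
  have hA : A = algebraMap ℂ _ (A default default) := by
    ext x y
    obtain rfl := Subsingleton.elim x default
    obtain rfl := Subsingleton.elim y default
    rw [algebraMap_matrix_apply, if_pos rfl, Algebra.algebraMap_self_apply]
  exact Algebra.mem_bot.mpr ⟨A default default, by
    rw [hA]; exact ((nbhdLiftHom d ∅).toAlgHom.commutes _).symm⟩

variable {V : Submodule ℂ ((∀ a, d a) → ℂ)} {v : (∀ a, d a) → ℂ}
  {E : Matrix (∀ a, d a) (∀ a, d a) ℂ}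

/-- `v` is a nonzero vector whose orbit under the operators acting on `S` stays in `V`. A maximal
such `S` locates a vector of `V` in the support of every `ρ_{N_j} ⊗ I`. -/
def IsFreeOn (V : Submodule ℂ ((∀ a, d a) → ℂ)) (S : Finset (Fin n)) (v : (∀ a, d a) → ℂ) :
    Prop :=
  v ≠ 0 ∧ ∀ X ∈ localAlgebra d S, X *ᵥ v ∈ V

theorem isFreeOn_empty (hv : v ∈ V) (hv0 : v ≠ 0) : IsFreeOn V ∅ v := by
  refine ⟨hv0, fun X hX => ?_⟩
  obtain ⟨c, rfl⟩ := Algebra.mem_bot.mp (localAlgebra_empty (d := d) ▸ hX)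
  rw [Algebra.algebraMap_eq_smul_one, smul_mulVec, one_mulVec]
  exact V.smul_mem c hv

theorem IsFreeOn.union (hv : IsFreeOn V S v) (hE : E ∈ localAlgebra d N)
    (hV : ∀ A ∈ localAlgebra d N, ∀ w ∈ V, (A * (1 - E)) *ᵥ w ∈ V) (hX : X ∈ localAlgebra d S)
    (hne : ((1 - E) * X) *ᵥ v ≠ 0) : IsFreeOn V (N ∪ S) (((1 - E) * X) *ᵥ v) := by
  refine ⟨hne, fun Y hY => ?_⟩
  rw [← Finset.union_sdiff_self_eq_union] at hY
  replace hY := localAlgebra_union_le Finset.disjoint_sdiff hY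
  induction hY using Submodule.mul_induction_on' with
  | mem_mul_mem B hB C hC =>
    have hCX : C * X ∈ localAlgebra d S :=
      mul_mem (localAlgebra_mono Finset.sdiff_subset hC) hX
    have hCE : Commute C (1 - E) :=
      commute_of_mem_localAlgebra Finset.sdiff_disjoint hC (sub_mem (one_mem _) hE)
    have hBCX : B * C * ((1 - E) * X) = B * (1 - E) * (C * X) := by
      rw [mul_assoc, ← mul_assoc C, hCE.eq]
      simp only [mul_assoc]
    rw [mulVec_mulVec, hBCX, ← mulVec_mulVec]
    exact hV B hB _ (hv.2 _ hCX)
  | add Y _ Z _ hY hZ => rw [add_mulVec]; exact add_mem hY hZ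

theorem exists_mem_forall_mulVec_eq {J : Type*} {Nb : J → Finset (Fin n)}
    {E : J → Matrix (∀ a, d a) (∀ a, d a) ℂ} (hρ : ρ.trace ≠ 0)
    (hE : ∀ j, E j ∈ localAlgebra d (Nb j)) (hEρ : ∀ j, E j * ρ = ρ) (hV0 : V ≠ ⊥)
    (hV : ∀ j, ∀ A ∈ localAlgebra d (Nb j), ∀ v ∈ V, (A * (1 - E j)) *ᵥ v ∈ V) :
    ∃ v ∈ V, v ≠ 0 ∧ ∀ j, E j *ᵥ v = v := by
  obtain ⟨v₀, hv₀, hv₀_ne⟩ := V.ne_bot_iff.mp hV0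
  obtain ⟨S, ⟨v, hv⟩, hmax⟩ := {S | ∃ v, IsFreeOn V S v}.toFinite.exists_maximal
    ⟨∅, v₀, isFreeOn_empty hv₀ hv₀_ne⟩
  obtain ⟨B, hB⟩ := exists_nbhdLift_mul_mulVec_ne_zero (S := S)
    (trace_nbhdPtrace.trans_ne hρ) hv.1
  have hX : nbhdLift d S (nbhdPtrace d S ρ * B) ∈ localAlgebra d S := ⟨_, rfl⟩
  refine ⟨_, hv.2 _ hX, hB, fun j => ?_⟩
  -- Otherwise `N_j ∪ S` is free as well, so `N_j ⊆ S` by maximality and `(1 - E_j) ρ_S = 0`.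
  by_contra hne
  have hE' : 1 - E j ∈ localAlgebra d (Nb j) := sub_mem (one_mem _) (hE j)
  have hfree := hv.union (hE j) (hV j) hX <| by
    rwa [← mulVec_mulVec, sub_mulVec, one_mulVec, sub_ne_zero, ne_comm]
  have hjS : Nb j ⊆ S := Finset.subset_union_left.trans (hmax ⟨_, hfree⟩ Finset.subset_union_right)
  refine hfree.1 ?_
  rw [← nbhdLiftHom_apply, map_mul, nbhdLiftHom_apply, ← mul_assoc,
    mul_nbhdLift_nbhdPtrace_eq_zero (localAlgebra_mono hjS hE')
      (by rw [sub_mul, one_mul, hEρ, sub_self]), zero_mul, zero_mulVec]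

end LocalAlgebra

section StabilizingNoise

variable {n : ℕ} {d : Fin n → Type*} [∀ a, Fintype (d a)] [∀ a, DecidableEq (d a)]
  {N : Finset (Fin n)} {X Y ρ : Matrix (∀ a, d a) (∀ a, d a) ℂ}

variable (d N) in
/-- The orthogonal projection of `H` onto `supp(ρ_N ⊗ I)`. -/
noncomputable def nbhdSupportProj (ρ : Matrix (∀ a, d a) (∀ a, d a) ℂ) :
    Matrix (∀ a, d a) (∀ a, d a) ℂ :=
  nbhdLift d N (supportProj (nbhdPtrace d N ρ))

theorem isHermitian_nbhdLift_nbhdPtrace (hρ : ρ.PosSemidef) :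
    (nbhdLift d N (nbhdPtrace d N ρ)).IsHermitian :=
  (posSemidef_nbhdPtrace hρ).1.isSelfAdjoint.map (nbhdLiftHom d N)

theorem supportProj_nbhdLift_nbhdPtrace (hρ : ρ.PosSemidef) :
    supportProj (nbhdLift d N (nbhdPtrace d N ρ)) = nbhdSupportProj d N ρ :=
  supportProj_map (nbhdLiftHom d N) (posSemidef_nbhdPtrace hρ).1

theorem nbhdSupportProj_mem_localAlgebra : nbhdSupportProj d N ρ ∈ localAlgebra d N := ⟨_, rfl⟩

theorem isHermitian_nbhdSupportProj (hρ : ρ.PosSemidef) : (nbhdSupportProj d N ρ).IsHermitian :=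
  supportProj_nbhdLift_nbhdPtrace (N := N) hρ ▸
    isHermitian_supportProj (isHermitian_nbhdLift_nbhdPtrace hρ)

theorem mem_corner_nbhdSupportProj (hρ : ρ.PosSemidef)
    (h : msupp ρ ≤ msupp (nbhdLift d N (nbhdPtrace d N ρ))) :
    ρ ∈ corner (nbhdSupportProj d N ρ) := by
  have hl : nbhdSupportProj d N ρ * ρ = ρ := by
    rw [← supportProj_nbhdLift_nbhdPtrace hρ]
    exact supportProj_mul_eq_of_msupp_le (isHermitian_nbhdLift_nbhdPtrace hρ) hρ.1 h
  refine ⟨hl, ?_⟩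
  simpa [(isHermitian_nbhdSupportProj hρ).eq, hρ.1.eq] using congrArg conjTranspose hl

variable (d N ρ) in
/-- Finitely many neighborhood operators that are eigenvectors of the modular map of `ρ` and whose
commutant on `supp(ρ_N) ⊗ H_N̄` multiplies `ρ` into `F_{ρ_N}(Σ_N(ρ)) ⊗ B(H_N̄)`; the noise of the
stabilizing generator is built from them. -/
structure ModularFrame where
  size : ℕ
  weight : Fin size → ℝ
  op : Fin size → Matrix (∀ a, d a) (∀ a, d a) ℂ
  weight_pos : ∀ k, 0 < weight k
  op_mem : ∀ k, op k ∈ localAlgebra d N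
  mul_op : ∀ k, ρ * op k = (weight k : ℂ) • (op k * ρ)
  mul_mem_extF : ∀ X ∈ corner (nbhdSupportProj d N ρ), (∀ k, Commute (op k) X) →
    X * ρ ∈ extF d N ρ

namespace ModularFrame

theorem nonempty (hρ : ρ.PosSemidef) (hρF : ρ ∈ extF d N ρ)
    (hρP : ρ ∈ corner (nbhdSupportProj d N ρ)) : Nonempty (ModularFrame d N ρ) := by
  have hr := posSemidef_nbhdPtrace (N := N) hρ
  obtain ⟨m, lam, K, hlam, hK, hmem⟩ :=
    (isDistortedAlgebra_Fdist (nbhdPtrace d N ρ) (nbhdSchmidt d N ρ)).exists_modular_eigenoperators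
      hr (subset_Fdist _ _ nbhdPtrace_mem_nbhdSchmidt)
      (Fdist_le (isDistortedAlgebra_corner hr) (nbhdSchmidt_subset_corner hρP))
  have hblock := mem_extF_iff.mp hρF
  refine ⟨m, lam, fun k => nbhdLift d N (K k), hlam, fun k => ⟨K k, rfl⟩,
    fun k => nbhdBlock_ext (N := N) fun a b => ?_, fun X hX hKX => mem_extF_iff.mpr fun a b => ?_⟩
  · change _ = (lam k : ℂ) • nbhdBlock (nbhdLift d N (K k) * ρ) a b
    rw [nbhdBlock_mul_nbhdLift, nbhdBlock_nbhdLift_mul, hK k _ (hblock a b)]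
  · rw [nbhdBlock_mul]
    refine sum_mem fun c _ => hmem _ ⟨?_, ?_⟩ (fun k => ?_) _ (hblock c b)
    · rw [← nbhdBlock_nbhdLift_mul]
      exact congrArg (nbhdBlock · a c) hX.1
    · rw [← nbhdBlock_mul_nbhdLift]
      exact congrArg (nbhdBlock · a c) hX.2
    · rw [Commute, SemiconjBy, ← nbhdBlock_nbhdLift_mul, ← nbhdBlock_mul_nbhdLift, (hKX k).eq]

variable (f : ModularFrame d N ρ)

/-- The noise operators of the stabilizing neighborhood generator: each modular eigenoperator is
paired with its adjoint in detailed balance, and the operators `|a⟩⟨b| (1 - supp(ρ_N))` drive the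
system into the support of `ρ_N`. -/
noncomputable def noise :
    (Fin f.size ⊕ Fin f.size) ⊕ (nbhdIdx d N × nbhdIdx d N) → Matrix (∀ a, d a) (∀ a, d a) ℂ :=
  Sum.elim (Sum.elim (fun k => (√(f.weight k) : ℂ) • f.op k) fun k => (f.op k)ᴴ)
    fun p => nbhdLift d N (single p.1 p.2 1) * (1 - nbhdSupportProj d N ρ)

theorem noise_mem_localAlgebra (k) : f.noise k ∈ localAlgebra d N := by
  obtain (k | k) | p := k
  · exact Subalgebra.smul_mem _ (f.op_mem k) _
  · obtain ⟨A, hA⟩ := f.op_mem k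
    exact ⟨Aᴴ, (map_star (nbhdLiftHom d N) A).trans (congrArg star hA)⟩
  · exact mul_mem ⟨_, rfl⟩ (sub_mem (one_mem _) nbhdSupportProj_mem_localAlgebra)

theorem drain_mul_eq_zero (hρP : ρ ∈ corner (nbhdSupportProj d N ρ))
    (p : nbhdIdx d N × nbhdIdx d N) : f.noise (Sum.inr p) * ρ = 0 := by
  rw [noise, Sum.elim_inr, mul_assoc, sub_mul, one_mul, hρP.1, sub_self, mul_zero]

theorem dissipator_noise_apply (hρ : ρ.IsHermitian) (hρP : ρ ∈ corner (nbhdSupportProj d N ρ)) :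
    dissipator f.noise ρ = 0 := by
  rw [noise, dissipator_sumElim, LinearMap.add_apply,
    dissipator_apply_eq_zero_of_detailedBalance hρ (fun k => (f.weight_pos k).le) f.mul_op,
    zero_add]
  exact dissipator_apply_eq_zero_of_mul_eq_zero hρ (f.drain_mul_eq_zero hρP)

theorem noise_mul_eq_zero_or_conjTranspose_eq_smul (hρP : ρ ∈ corner (nbhdSupportProj d N ρ)) (k) :
    f.noise k * ρ = 0 ∨ ∃ (c : ℂ) (k' : _), (f.noise k)ᴴ = c • f.noise k' := by
  obtain (k | k) | p := k
  · refine .inr ⟨√(f.weight k), .inl (.inr k), ?_⟩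
    simp [noise]
  · have hw : (√(f.weight k) : ℂ) ≠ 0 :=
      Complex.ofReal_ne_zero.mpr (Real.sqrt_pos.mpr (f.weight_pos k)).ne'
    refine .inr ⟨(√(f.weight k) : ℂ)⁻¹, .inl (.inl k), ?_⟩
    change (f.op k)ᴴᴴ = _ • ((√(f.weight k) : ℂ) • f.op k)
    rw [conjTranspose_conjTranspose, inv_smul_smul₀ hw]
  · exact .inl (f.drain_mul_eq_zero hρP p)

theorem mul_one_sub_mulVec_mem {V : Submodule ℂ ((∀ a, d a) → ℂ)}
    (hV : ∀ v ∈ V, ∀ k, f.noise k *ᵥ v ∈ V) {A : Matrix (∀ a, d a) (∀ a, d a) ℂ}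
    (hA : A ∈ localAlgebra d N) {v : (∀ a, d a) → ℂ} (hv : v ∈ V) :
    (A * (1 - nbhdSupportProj d N ρ)) *ᵥ v ∈ V := by
  obtain ⟨A, rfl⟩ := hA
  change (nbhdLiftHom d N A * _) *ᵥ v ∈ V
  induction A using Matrix.induction_on' with
  | h_zero => rw [map_zero, zero_mul, zero_mulVec]; exact zero_mem V
  | h_add A B hA hB => rw [map_add, add_mul, add_mulVec]; exact add_mem hA hB
  | h_std_basis a b c =>
    have hc : single a b c = c • single a b (1 : ℂ) := by rw [smul_single, smul_eq_mul, mul_one]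
    rw [hc, map_smul, smul_mul_assoc, smul_mulVec]
    exact V.smul_mem c (hV v hv (.inr (a, b)))

theorem op_mul_mul_eq (h : ∀ k, (f.noise k * Y - Y * f.noise k) * ρ = 0) (k : Fin f.size) :
    f.op k * Y * ρ = Y * f.op k * ρ := by
  have hw : (√(f.weight k) : ℂ) ≠ 0 :=
    Complex.ofReal_ne_zero.mpr (Real.sqrt_pos.mpr (f.weight_pos k)).ne'
  have h := h (.inl (.inl k))
  rw [noise, Sum.elim_inl, Sum.elim_inl, smul_mul_assoc, mul_smul_comm, ← smul_sub, smul_mul_assoc,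
    smul_eq_zero_iff_right hw, sub_mul] at h
  exact sub_eq_zero.mp h

theorem nbhdSupportProj_mul_mul_eq (hρP : ρ ∈ corner (nbhdSupportProj d N ρ))
    (h : ∀ k, (f.noise k * Y - Y * f.noise k) * ρ = 0) :
    nbhdSupportProj d N ρ * (Y * ρ) = Y * ρ := by
  have hdrain (a : nbhdIdx d N) :
      nbhdLift d N (single a a 1) * ((1 - nbhdSupportProj d N ρ) * (Y * ρ)) = 0 := by
    have h := h (.inr (a, a))
    rwa [sub_mul, mul_assoc Y, f.drain_mul_eq_zero hρP, mul_zero, sub_zero, mul_assoc, noise,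
      Sum.elim_inr, mul_assoc] at h
  have h0 := calc
    (1 - nbhdSupportProj d N ρ) * (Y * ρ) =
        nbhdLiftHom d N (∑ a, single a a 1) * ((1 - nbhdSupportProj d N ρ) * (Y * ρ)) := by
      rw [sum_single_one, map_one, one_mul]
    _ = 0 := by
      simp only [map_sum, Finset.sum_mul, nbhdLiftHom_apply, hdrain, Finset.sum_const_zero]
  rw [sub_mul, one_mul, sub_eq_zero] at h0
  exact h0.symm

theorem mul_mem_extF_of_commute_supportProj (hρ : ρ.IsHermitian)
    (hρP : ρ ∈ corner (nbhdSupportProj d N ρ)) (hY : Commute (supportProj ρ) Y)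
    (h : ∀ k, (f.noise k * Y - Y * f.noise k) * ρ = 0) : Y * ρ ∈ extF d N ρ := by
  have hcomm (k : Fin f.size) : Commute (f.op k) (Y * supportProj ρ) := by
    have hQK := commute_supportProj_of_mul_eq_smul_mul hρ (f.weight_pos k).ne' (f.mul_op k)
    calc f.op k * (Y * supportProj ρ) = f.op k * Y * ρ * mpinv ρ := by
          simp only [supportProj, mul_assoc]
      _ = Y * (f.op k * supportProj ρ) := by
          rw [f.op_mul_mul_eq h k]
          simp only [supportProj, mul_assoc]
      _ = Y * supportProj ρ * f.op k := by rw [← hQK.eq, mul_assoc]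
  have hYρ := f.mul_mem_extF _ (mul_supportProj_mem_corner hρ hρP hY) hcomm
  rwa [mul_assoc, supportProj_mul hρ] at hYρ

end ModularFrame

end StabilizingNoise

section FrustrationFree

variable {n : ℕ} {d : Fin n → Type*} [∀ a, Fintype (d a)] [∀ a, DecidableEq (d a)]
  {J : Type*} {Nb : J → Finset (Fin n)} {Y ρ : Matrix (∀ a, d a) (∀ a, d a) ℂ}

theorem isNbhdGen_dissipator {N : Finset (Fin n)} {κ : Type*} [Fintype κ]
    {R : κ → Matrix (∀ a, d a) (∀ a, d a) ℂ} (hR : ∀ k, R k ∈ localAlgebra d N) :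
    IsNbhdGen d N (dissipator R) := by
  choose A hA using hR
  let e := Fintype.equivFin κ
  refine ⟨0, isHermitian_zero, _, A ∘ e.symm, ?_⟩
  have hAe : (fun k => nbhdLift d N ((A ∘ e.symm) k)) = R ∘ e.symm :=
    funext fun k => hA (e.symm k)
  have h0 : nbhdLift d N (0 : Matrix (nbhdIdx d N) (nbhdIdx d N) ℂ) = 0 :=
    map_zero (nbhdLiftHom d N)
  rw [hAe, h0, lindbladMap_zero_eq_dissipator, dissipator_comp_equiv]

theorem supportProj_mul_eq_of_forall_nbhdSupportProj (hρ : ρ.PosSemidef)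
    (h : msupp ρ = ⨅ j, msupp (nbhdLift d (Nb j) (nbhdPtrace d (Nb j) ρ)))
    (hY : ∀ j, nbhdSupportProj d (Nb j) ρ * Y = Y) : supportProj ρ * Y = Y := by
  simp only [← supportProj_nbhdLift_nbhdPtrace hρ,
    supportProj_mul_eq_iff (isHermitian_nbhdLift_nbhdPtrace hρ)] at hY
  rw [supportProj_mul_eq_iff hρ.1, h]
  exact fun w => (Submodule.mem_iInf _).mpr fun j => hY j w

variable (f : ∀ j, ModularFrame d (Nb j) ρ)

theorem exists_mulVec_mem_of_noise_invariant (hρ : IsDensity ρ)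
    (h : msupp ρ = ⨅ j, msupp (nbhdLift d (Nb j) (nbhdPtrace d (Nb j) ρ)))
    {V : Submodule ℂ ((∀ a, d a) → ℂ)} (hV0 : V ≠ ⊥)
    (hV : ∀ v ∈ V, ∀ j k, (f j).noise k *ᵥ v ∈ V) : ∃ w, ρ *ᵥ w ∈ V ∧ ρ *ᵥ w ≠ 0 := by
  obtain ⟨v, hv, hv0, hEv⟩ := exists_mem_forall_mulVec_eq (Nb := Nb) (hρ.2.trans_ne one_ne_zero)
    (fun j => nbhdSupportProj_mem_localAlgebra)
    (fun j => (mem_corner_nbhdSupportProj hρ.1 (h.trans_le (iInf_le _ j))).1) hV0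
    fun j A hA v hv => (f j).mul_one_sub_mulVec_mem (fun v hv => hV v hv j) hA hv
  have hvρ : v ∈ msupp ρ := by
    rw [h, Submodule.mem_iInf]
    intro j
    rw [mem_msupp_iff (isHermitian_nbhdLift_nbhdPtrace hρ.1),
      supportProj_nbhdLift_nbhdPtrace hρ.1, hEv]
  rw [msupp, hρ.1.1.eq] at hvρ
  obtain ⟨w, rfl⟩ := hvρ
  exact ⟨w, hv, hv0⟩

theorem mul_eq_smul_of_noise_commutator (hρ : ρ.PosSemidef)
    (h1 : Submodule.span ℂ {ρ} = ⨅ j, extF d (Nb j) ρ)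
    (h2 : msupp ρ = ⨅ j, msupp (nbhdLift d (Nb j) (nbhdPtrace d (Nb j) ρ)))
    (hY : ∀ j k, ((f j).noise k * Y - Y * (f j).noise k) * ρ = 0)
    (hY' : ∀ j k, ((f j).noise k * Yᴴ - Yᴴ * (f j).noise k) * ρ = 0) :
    ∃ c : ℂ, Y * ρ = c • ρ := by
  have hρP (j : J) := mem_corner_nbhdSupportProj hρ (h2.trans_le (iInf_le _ j))
  have hcomm : Commute (supportProj ρ) Y := commute_supportProj hρ.1
    (supportProj_mul_eq_of_forall_nbhdSupportProj hρ h2 fun j =>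
      (f j).nbhdSupportProj_mul_mul_eq (hρP j) (hY j))
    (supportProj_mul_eq_of_forall_nbhdSupportProj hρ h2 fun j =>
      (f j).nbhdSupportProj_mul_mul_eq (hρP j) (hY' j))
  have hmem : Y * ρ ∈ Submodule.span ℂ {ρ} := by
    rw [h1, Submodule.mem_iInf]
    exact fun j => (f j).mul_mem_extF_of_commute_supportProj hρ.1 (hρP j) hcomm (hY j)
  obtain ⟨c, hc⟩ := Submodule.mem_span_singleton.mp hmem
  exact ⟨c, hc.symm⟩

theorem isGAS_sum_dissipator_noise [Fintype J] (hρ : IsDensity ρ)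
    (h1 : Submodule.span ℂ {ρ} = ⨅ j, extF d (Nb j) ρ)
    (h2 : msupp ρ = ⨅ j, msupp (nbhdLift d (Nb j) (nbhdPtrace d (Nb j) ρ))) :
    IsGAS (∑ j, dissipator (f j).noise) ρ := by
  have hρP (j : J) := mem_corner_nbhdSupportProj hρ.1 (h2.trans_le (iInf_le _ j))
  have hsum := dissipator_sigma fun j => (f j).noise
  rw [← hsum]
  refine isGAS_dissipator hρ ?_ (fun V hV0 hV => ?_) (fun Y hY hY' => ?_) fun ⟨j, k⟩ => ?_
  · rw [hsum, LinearMap.sum_apply]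
    exact Finset.sum_eq_zero fun j _ => (f j).dissipator_noise_apply hρ.1.1 (hρP j)
  · exact exists_mulVec_mem_of_noise_invariant f hρ h2 hV0 fun v hv j k => hV v hv ⟨j, k⟩
  · exact mul_eq_smul_of_noise_commutator f hρ.1 h1 h2 (fun j k => hY ⟨j, k⟩)
      fun j k => hY' ⟨j, k⟩
  · refine ((f j).noise_mul_eq_zero_or_conjTranspose_eq_smul (hρP j) k).imp_right ?_
    exact fun ⟨c, k', h⟩ => ⟨c, ⟨j, k'⟩, h⟩

end FrustrationFree

/-! ### Statement 12 -/

theorem stmt12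
    {n : ℕ} {d : Fin n → Type*} [∀ a, Fintype (d a)] [∀ a, DecidableEq (d a)]
    {M : ℕ} (Nb : Fin M → Finset (Fin n))
    (ρ : Matrix (∀ a, d a) (∀ a, d a) ℂ) (hρ : IsDensity ρ)
    (h1 : Submodule.span ℂ {ρ} = ⨅ j, extF d (Nb j) ρ)
    (h2 : msupp ρ = ⨅ j, msupp (nbhdLift d (Nb j) (nbhdPtrace d (Nb j) ρ))) :
    IsFFQLS d Nb ρ := by
  have hρP (j) : ρ ∈ corner (nbhdSupportProj d (Nb j) ρ) :=
    mem_corner_nbhdSupportProj hρ.1 (h2.trans_le (iInf_le _ j))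
  have hρF (j) : ρ ∈ extF d (Nb j) ρ :=
    iInf_le (fun j => extF d (Nb j) ρ) j (h1 ▸ Submodule.mem_span_singleton_self ρ)
  have f (j) : ModularFrame d (Nb j) ρ := (ModularFrame.nonempty hρ.1 (hρF j) (hρP j)).some
  have hGAS := isGAS_sum_dissipator_noise f hρ h1 h2
  refine ⟨_, fun j => isNbhdGen_dissipator (f j).noise_mem_localAlgebra, ?_, hGAS⟩
  intro σ hσ hLσ j
  rw [hGAS.eq_of_apply_eq_zero hσ hLσ, (f j).dissipator_noise_apply hρ.1.1 (hρP j)]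

end QDS
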